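/- arXiv:2411.05372 — 5 statements merged into one kernel-verified Lean document; each statement's English description precedes it below -/
import Mathlib

section
/- There exist a finite abelian group Γ and a subset Λ ⊆ Γ satisfying (EP1) but not (EP2), and there exist a finite abelian group Γ' and a subset Λ' ⊆ Γ' satisfying (EP2) but not (EP1). -/
/-- Condition (EP1): for all `a, b, c` with `a + b + c ∈ Λ`, either `a + b ∈ Λ`,
or `(2a + ⟨c⟩) ∩ Λ ≠ ∅`, or `(2b + ⟨c⟩) ∩ Λ ≠ ∅`. -/
def EP1 {Γ : Type} [AddCommGroup Γ] (Λ : Set Γ) : Prop :=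
  ∀ a b c : Γ, a + b + c ∈ Λ →
    a + b ∈ Λ ∨ (∃ z ∈ AddSubgroup.zmultiples c, 2 • a + z ∈ Λ) ∨
      ∃ z ∈ AddSubgroup.zmultiples c, 2 • b + z ∈ Λ

/-- Condition (EP2): for all `a, b, c` with `2a + b + c ∈ Λ`, either
`(2a + ⟨b⟩) ∩ Λ ≠ ∅` or `(2a + ⟨c⟩) ∩ Λ ≠ ∅`. -/
def EP2 {Γ : Type} [AddCommGroup Γ] (Λ : Set Γ) : Prop :=
  ∀ a b c : Γ, 2 • a + b + c ∈ Λ →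
    (∃ z ∈ AddSubgroup.zmultiples b, 2 • a + z ∈ Λ) ∨
      ∃ z ∈ AddSubgroup.zmultiples c, 2 • a + z ∈ Λ

/-- The Erdős–Pósa condition: both (EP1) and (EP2). -/
def EPCondition {Γ : Type} [AddCommGroup Γ] (Λ : Set Γ) : Prop :=
  EP1 Λ ∧ EP2 Λ

/-!
In a cyclic `p`-group any two cyclic subgroups are comparable, so `b + c` lies in `⟨b⟩` or in `⟨c⟩`
and every subset satisfies (EP2). A singleton `{g}` violates (EP1) as soon as some `⟨c⟩ ≠ 0` misses
`g`, as `⟨2⟩` misses `1` in `ℤ/4`.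

In a group of order `9` a proper subgroup `⟨c⟩ ≠ 0` has index `3`. If `p = a + b + c ∈ Λ`, then `2a`
and `2b` are symmetric about `p` modulo `⟨c⟩`. Hence both lie in the coset of `p`, or they represent
the two other cosets, one of which meets `Λ` unless `Λ` lies in a single coset. So (EP1) holds for
any three non-collinear points of the affine plane over `𝔽₃`. With `Λ` the points `0`, `(1, 0)`,
`(0, 1)`, there are two lines through `(0, 2)` that miss `Λ`, and the sum of their directions leads
back to `Λ`, violating (EP2).
-/

section EP2NotEP1

variable {Γ : Type} [AddCommGroup Γ]

theorem EP2_of_forall_mem_zmultiples_or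
    (h : ∀ b c : Γ, b ∈ AddSubgroup.zmultiples c ∨ c ∈ AddSubgroup.zmultiples b) (Λ : Set Γ) :
    EP2 Λ := by
  intro a b c hmem
  rw [add_assoc] at hmem
  rcases h b c with hb | hc
  · exact .inr ⟨b + c, add_mem hb (AddSubgroup.mem_zmultiples c), hmem⟩
  · exact .inl ⟨b + c, add_mem (AddSubgroup.mem_zmultiples b) hc, hmem⟩

theorem mem_zmultiples_of_addOrderOf_dvd {G : Type*} [AddGroup G] [IsAddCyclic G] [Finite G]
    {b c : G} (h : addOrderOf b ∣ addOrderOf c) : b ∈ AddSubgroup.zmultiples c := by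
  classical
  have := Fintype.ofFinite G
  let torsion : Finset G := {x | addOrderOf c • x = 0}
  have hsub : (AddSubgroup.zmultiples c : Set G).toFinset ⊆ torsion := by
    intro x hx
    have hx : x ∈ AddSubgroup.zmultiples c := by simpa using hx
    simpa [torsion] using addOrderOf_dvd_iff_nsmul_eq_zero.1 (addOrderOf_dvd_of_mem_zmultiples hx)
  have hcard : torsion.card ≤ (AddSubgroup.zmultiples c : Set G).toFinset.card := by
    calc torsion.card ≤ addOrderOf c := IsAddCyclic.card_nsmul_eq_zero_le (addOrderOf_pos c)
      _ = _ := by rw [Set.toFinset_card]; exact (Fintype.card_zmultiples).symm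
  have hb : b ∈ torsion := by simpa [torsion] using addOrderOf_dvd_iff_nsmul_eq_zero.1 h
  rw [← Finset.eq_of_subset_of_card_le hsub hcard] at hb
  simpa using hb

theorem EP2_of_isAddCyclic_of_card_eq_prime_pow [IsAddCyclic Γ] {p n : ℕ} (hp : p.Prime)
    (hcard : Nat.card Γ = p ^ n) (Λ : Set Γ) : EP2 Λ := by
  have : Finite Γ := Nat.finite_of_card_ne_zero (hcard ▸ pow_ne_zero n hp.ne_zero)
  have exists_addOrderOf_eq (x : Γ) : ∃ k ≤ n, addOrderOf x = p ^ k :=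
    (Nat.dvd_prime_pow hp).1 (hcard ▸ addOrderOf_dvd_natCard x)
  refine EP2_of_forall_mem_zmultiples_or (fun b c ↦ ?_) Λ
  obtain ⟨i, -, hi⟩ := exists_addOrderOf_eq b
  obtain ⟨j, -, hj⟩ := exists_addOrderOf_eq c
  exact (le_total i j).imp
    (fun hij ↦ mem_zmultiples_of_addOrderOf_dvd (hi ▸ hj ▸ pow_dvd_pow p hij))
    (fun hji ↦ mem_zmultiples_of_addOrderOf_dvd (hi ▸ hj ▸ pow_dvd_pow p hji))

theorem not_EP1_singleton {g c : Γ} (hc : c ≠ 0) (hg : g ∉ AddSubgroup.zmultiples c) :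
    ¬ EP1 ({g} : Set Γ) := by
  intro h
  rcases h 0 (g - c) c (by simp) with hgc | ⟨z, hz, hzg⟩ | ⟨z, hz, hzg⟩
  · exact hc (by simpa using hgc)
  · have z_eq : z = g := by simpa using hzg
    exact hg (z_eq ▸ hz)
  · rw [Set.mem_singleton_iff] at hzg
    have g_eq : g = 2 • c - z := by
      calc g = 2 • c - z + (2 • (g - c) + z) - g := by abel
        _ = 2 • c - z := by rw [hzg, add_sub_cancel_right]
    exact hg (g_eq ▸ sub_mem (nsmul_mem (AddSubgroup.mem_zmultiples c) 2) hz)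

end EP2NotEP1

section EP1NotEP2

open scoped Pointwise

variable {Γ : Type} [AddCommGroup Γ] {Λ : Set Γ}

theorem eq_zero_or_eq_or_eq_neg_of_card_eq_three {Q : Type*} [AddGroup Q] (hQ : Nat.card Q = 3)
    {y : Q} (hy : y ≠ 0) (x : Q) : x = 0 ∨ x = y ∨ x = -y := by
  have e : Q ≃+ ZMod 3 := addEquivOfPrimeCardEq (p := 3) hQ (Nat.card_zmod 3)
  have key : ∀ u v : ZMod 3, v ≠ 0 → u = 0 ∨ u = v ∨ u = -v := by decide
  simpa [← map_neg] using key (e x) (e y) (by simpa using hy)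

theorem exists_two_nsmul_add_mem_of_index_eq_three {H : AddSubgroup Γ} (hH : H.index = 3)
    {p q a b : Γ} (hp : p ∈ Λ) (hq : q ∈ Λ) (hpq : q - p ∉ H) (hab : a + b - p ∈ H) :
    (∃ z ∈ H, 2 • a + z ∈ Λ) ∨ ∃ z ∈ H, 2 • b + z ∈ Λ := by
  have hpq' : ((q - p : Γ) : Γ ⧸ H) ≠ 0 := by rwa [Ne, QuotientAddGroup.eq_zero_iff]
  rcases eq_zero_or_eq_or_eq_neg_of_card_eq_three hH hpq' ((2 • a - p : Γ) : Γ ⧸ H) with h | h | h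
  · rw [QuotientAddGroup.eq_zero_iff] at h
    exact .inl ⟨p - 2 • a, by simpa using neg_mem h, by simpa⟩
  · rw [QuotientAddGroup.eq] at h
    exact .inl ⟨q - 2 • a, by convert h using 1; abel, by simpa⟩
  · rw [← QuotientAddGroup.mk_neg, QuotientAddGroup.eq] at h
    refine .inr ⟨q - 2 • b, ?_, by simpa⟩
    convert neg_mem (add_mem h (nsmul_mem hab 2)) using 1
    abel

theorem exists_mem_sub_notMem_of_closure_sub_eq_top (hΛ : AddSubgroup.closure (Λ - Λ) = ⊤)
    {H : AddSubgroup Γ} (hH : H ≠ ⊤) (p : Γ) : ∃ q ∈ Λ, q - p ∉ H := by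
  contrapose! hH
  rw [eq_top_iff, ← hΛ, AddSubgroup.closure_le]
  rintro _ ⟨q, hq, r, hr, rfl⟩
  simpa using sub_mem (hH q hq) (hH r hr)

theorem index_zmultiples_eq_one_or_eq_of_card_eq_prime_sq {G : Type*} [AddGroup G] {p : ℕ}
    (hp : p.Prime) (hG : Nat.card G = p ^ 2) {c : G} (hc : c ≠ 0) :
    (AddSubgroup.zmultiples c).index = 1 ∨ (AddSubgroup.zmultiples c).index = p := by
  obtain ⟨k, hk, hindex⟩ :=
    (Nat.dvd_prime_pow hp).1 (hG ▸ (AddSubgroup.zmultiples c).index_dvd_card)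
  have hk2 : k ≠ 2 := by
    rintro rfl
    have hmul := (AddSubgroup.zmultiples c).card_mul_index
    rw [hindex, hG, Nat.card_zmultiples] at hmul
    have horder : addOrderOf c = 1 :=
      Nat.eq_of_mul_eq_mul_right (pow_pos hp.pos 2) (hmul.trans (one_mul _).symm)
    exact hc (AddMonoid.addOrderOf_eq_one_iff.1 horder)
  have hk01 : k = 0 ∨ k = 1 := by lia
  exact hk01.imp (fun h ↦ by simp [hindex, h]) fun h ↦ by simp [hindex, h]

theorem EP1_of_card_eq_nine (hΓ : Nat.card Γ = 9) (hΛ : AddSubgroup.closure (Λ - Λ) = ⊤) :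
    EP1 Λ := by
  intro a b c hmem
  rcases eq_or_ne c 0 with rfl | hc
  · exact .inl (by simpa using hmem)
  right
  rcases index_zmultiples_eq_one_or_eq_of_card_eq_prime_sq Nat.prime_three hΓ hc with h | h
  · refine .inl ⟨a + b + c - 2 • a, ?_, by simpa⟩
    rw [AddSubgroup.index_eq_one.1 h]
    trivial
  · have hne : AddSubgroup.zmultiples c ≠ ⊤ := fun htop ↦ by simp [htop] at h
    obtain ⟨q, hq, hqp⟩ := exists_mem_sub_notMem_of_closure_sub_eq_top hΛ hne (a + b + c)
    exact exists_two_nsmul_add_mem_of_index_eq_three h hmem hq hqp (by simp)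

theorem not_EP2_of_addMonoidHom {A B : Type*} [AddZeroClass A] [AddZeroClass B] (φ : Γ →+ A)
    (ψ : Γ →+ B) {a b c : Γ} (hmem : 2 • a + b + c ∈ Λ) (hb : φ b = 0) (hc : ψ c = 0)
    (hφ : ∀ x ∈ Λ, φ x ≠ φ (2 • a)) (hψ : ∀ x ∈ Λ, ψ x ≠ ψ (2 • a)) : ¬ EP2 Λ := by
  intro h
  rcases h a b c hmem with ⟨z, hz, hzΛ⟩ | ⟨z, hz, hzΛ⟩
  · have hφz : φ z = 0 := (AddSubgroup.zmultiples_le (H := φ.ker)).2 hb hz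
    exact hφ _ hzΛ (by rw [map_add, hφz, add_zero])
  · have hψz : ψ z = 0 := (AddSubgroup.zmultiples_le (H := ψ.ker)).2 hc hz
    exact hψ _ hzΛ (by rw [map_add, hψz, add_zero])

/-- Three non-collinear points of the affine plane over `𝔽₃`, the subset that satisfies (EP1) but
not (EP2). -/
def triangle : Set (ZMod 3 × ZMod 3) := {(0, 0), (1, 0), (0, 1)}

theorem closure_triangle_sub_triangle : AddSubgroup.closure (triangle - triangle) = ⊤ := by
  have hfst : ((1, 0) : ZMod 3 × ZMod 3) ∈ AddSubgroup.closure (triangle - triangle) :=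
    AddSubgroup.subset_closure ⟨(1, 0), by simp [triangle], (0, 0), by simp [triangle], by simp⟩
  have hsnd : ((0, 1) : ZMod 3 × ZMod 3) ∈ AddSubgroup.closure (triangle - triangle) :=
    AddSubgroup.subset_closure ⟨(0, 1), by simp [triangle], (0, 0), by simp [triangle], by simp⟩
  refine (AddSubgroup.eq_top_iff' _).2 fun x ↦ ?_
  have hx : x = x.1.val • (1, 0) + x.2.val • (0, 1) := by ext <;> simp
  rw [hx]
  exact add_mem (nsmul_mem hfst _) (nsmul_mem hsnd _)

theorem not_EP2_triangle : ¬ EP2 triangle := by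
  refine not_EP2_of_addMonoidHom (AddMonoidHom.snd (ZMod 3) (ZMod 3))
    (AddMonoidHom.fst (ZMod 3) (ZMod 3) + AddMonoidHom.snd (ZMod 3) (ZMod 3))
    (a := (0, 1)) (b := (1, 0)) (c := (-1, 1)) ?_ ?_ ?_ ?_ ?_
  · exact .inl (by decide)
  · rfl
  · decide
  · rintro _ (rfl | rfl | rfl) <;> decide
  · rintro _ (rfl | rfl | rfl) <;> decide

end EP1NotEP2

/-- There is a finite abelian group with a subset satisfying (EP1)
but not (EP2), and a finite abelian group with a subset satisfying (EP2) but not (EP1). -/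
theorem exists_EP1_not_EP2_and_exists_EP2_not_EP1 :
    (∃ (Γ : Type) (_inst : AddCommGroup Γ) (_fin : Fintype Γ) (Λ : Set Γ),
      @EP1 Γ _inst Λ ∧ ¬ @EP2 Γ _inst Λ) ∧
    (∃ (Γ' : Type) (_inst' : AddCommGroup Γ') (_fin' : Fintype Γ') (Λ' : Set Γ'),
      @EP2 Γ' _inst' Λ' ∧ ¬ @EP1 Γ' _inst' Λ') := by
  constructor
  · exact ⟨ZMod 3 × ZMod 3, inferInstance, inferInstance, triangle,
      EP1_of_card_eq_nine (by simp) closure_triangle_sub_triangle, not_EP2_triangle⟩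
  · have hone : (1 : ZMod 4) ∉ AddSubgroup.zmultiples 2 := by
      rintro ⟨k, hk⟩
      have two_mul_ne_one : ∀ x : ZMod 4, x * 2 ≠ 1 := by decide
      exact two_mul_ne_one k (by simpa using hk)
    exact ⟨ZMod 4, inferInstance, inferInstance, {1},
      EP2_of_isAddCyclic_of_card_eq_prime_pow Nat.prime_two (n := 2) (by simp) {1},
      not_EP1_singleton (c := 2) (by decide) hone⟩
end

section
/- Let Γ be a finite abelian group and let Λ ⊆ Γ. Suppose there exist an integer m ≥ 1, elements g₁,…,g_m, h₁, h₂ ∈ Γ, and a nonempty subset S ⊆ [m] such that: (i) (Σ_{i∈[m]} g_i) + h₁ + h₂ ∈ Λ; (ii) for every i ∈ [m] and all b₁,b₂ ∈ {0,1,2} with b₁+b₂ = 2, (⟨g_j : j ∈ [m]∖{i}⟩ + b₁h₁ + b₂h₂) ∩ Λ = ∅; (iii) for all b₁,b₂ ∈ {0,1,2} with b₁+b₂ = 2 and all integers c₁,…,c_m with (Σ_{i∈[m]} c_i g_i) + b₁h₁ + b₂h₂ ∈ Λ, every i ∈ [m]∖S has c_i odd; and (iv) if m = 1, then (⟨g₁⟩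 + 2h₁) ∩ Λ = ∅ and (⟨g₁⟩ + 2h₂) ∩ Λ = ∅. Then Λ does not satisfy the Erdős–Pósa condition. -/
/-!
If there are two indices `p ≠ q`, apply (EP1) to `a = h₁ + g p`, `b = h₂` and `c` the sum of the
other labels. An element of `Λ` of the form `h₁ + g p + h₂` does not involve `g q`, and one in
`2h₂ + ⟨c⟩` does not involve `g p`. In the remaining case `2h₁ + 2(g p) + z ∈ Λ` with `z ∈ ⟨c⟩`,
and (EP2) discards either `z` or `2(g p)`, so that again `g q` or `g p` is not involved. Every case
contradicts (ii). With a single index, (EP1) applied to `h₁`, `h₂`, `g₁` contradicts (ii) or (iv).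
-/

theorem apply_mem_closure_image_ne {ι G : Type*} [AddGroup G] (g : ι → G) {i j : ι}
    (hij : i ≠ j) : g i ∈ AddSubgroup.closure (g '' {k | k ≠ j}) :=
  AddSubgroup.subset_closure (Set.mem_image_of_mem g hij)

theorem sum_erase_mem_closure_image_ne {ι G : Type*} [AddCommGroup G] [DecidableEq ι]
    (s : Finset ι) (g : ι → G) (i : ι) :
    ∑ j ∈ s.erase i, g j ∈ AddSubgroup.closure (g '' {j | j ≠ i}) :=
  AddSubgroup.sum_mem _ fun _ hj ↦ apply_mem_closure_image_ne g (Finset.ne_of_mem_erase hj)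

section

variable {Γ : Type} [AddCommGroup Γ] {Λ : Set Γ} {K L : AddSubgroup Γ} {a b c x y h₁ h₂ : Γ}

theorem EP1.exists_mem_subgroup (hΛ : EP1 Λ) (hc : c ∈ L) (habc : a + b + c ∈ Λ) :
    a + b ∈ Λ ∨ (∃ z ∈ L, 2 • a + z ∈ Λ) ∨ ∃ z ∈ L, 2 • b + z ∈ Λ := by
  have hle : AddSubgroup.zmultiples c ≤ L := AddSubgroup.zmultiples_le_of_mem hc
  exact (hΛ a b c habc).imp_right <|
    Or.imp (fun ⟨z, hz, hmem⟩ ↦ ⟨z, hle hz, hmem⟩) (fun ⟨z, hz, hmem⟩ ↦ ⟨z, hle hz, hmem⟩)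

theorem EP2.exists_mem_subgroup (hΛ : EP2 Λ) (hb : b ∈ K) (hc : c ∈ L)
    (habc : 2 • a + b + c ∈ Λ) :
    (∃ z ∈ K, 2 • a + z ∈ Λ) ∨ ∃ z ∈ L, 2 • a + z ∈ Λ :=
  (hΛ a b c habc).imp
    (fun ⟨z, hz, hmem⟩ ↦ ⟨z, AddSubgroup.zmultiples_le_of_mem hb hz, hmem⟩)
    (fun ⟨z, hz, hmem⟩ ↦ ⟨z, AddSubgroup.zmultiples_le_of_mem hc hz, hmem⟩)

theorem EPCondition.exists_mem_subgroup (hΛ : EPCondition Λ) (hx : x ∈ K) (hy : y ∈ L)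
    (hsum : x + y + h₁ + h₂ ∈ Λ) :
    x + h₁ + h₂ ∈ Λ ∨ (∃ z ∈ K, 2 • h₁ + z ∈ Λ) ∨ (∃ z ∈ L, 2 • h₁ + z ∈ Λ) ∨
      ∃ z ∈ L, 2 • h₂ + z ∈ Λ := by
  obtain ⟨hEP1, hEP2⟩ := hΛ
  have hsum' : (x + h₁) + h₂ + y ∈ Λ := by convert hsum using 1; abel
  rcases hEP1.exists_mem_subgroup hy hsum' with hmem | ⟨z, hz, hmem⟩ | hmem
  · exact .inl hmem
  · have hsplit : 2 • h₁ + 2 • x + z ∈ Λ := by convert hmem using 1; abel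
    rcases hEP2.exists_mem_subgroup (K.nsmul_mem hx 2) hz hsplit with hK | hL
    · exact .inr (.inl hK)
    · exact .inr (.inr (.inl hL))
  · exact .inr (.inr (.inr hmem))

variable {ι : Type*}

theorem not_EPCondition_of_subsingleton [Fintype ι] [Subsingleton ι] {g : ι → Γ} (i : ι)
    (hsum : (∑ i, g i) + h₁ + h₂ ∈ Λ) (h₁₂ : h₁ + h₂ ∉ Λ)
    (h₁₁ : ¬ ∃ z ∈ AddSubgroup.zmultiples (g i), z + 2 • h₁ ∈ Λ)
    (h₂₂ : ¬ ∃ z ∈ AddSubgroup.zmultiples (g i), z + 2 • h₂ ∈ Λ) :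
    ¬ EPCondition Λ := by
  rintro ⟨hEP1, -⟩
  rw [Fintype.sum_subsingleton g i, add_assoc, add_comm] at hsum
  simp only [add_comm _ (2 • _)] at h₁₁ h₂₂
  rcases hEP1 h₁ h₂ (g i) hsum with hmem | hmem | hmem
  exacts [h₁₂ hmem, h₁₁ hmem, h₂₂ hmem]

theorem not_EPCondition_of_nontrivial [Fintype ι] [Nontrivial ι] {g : ι → Γ}
    (hsum : (∑ i, g i) + h₁ + h₂ ∈ Λ)
    (havoid : ∀ i : ι, ∀ b₁ b₂ : ℕ, b₁ + b₂ = 2 →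
      ¬ ∃ z ∈ AddSubgroup.closure (g '' {j | j ≠ i}), z + b₁ • h₁ + b₂ • h₂ ∈ Λ) :
    ¬ EPCondition Λ := by
  classical
  intro hΛ
  obtain ⟨p, q, hpq⟩ := exists_pair_ne ι
  have hp := apply_mem_closure_image_ne g hpq
  have hrest := sum_erase_mem_closure_image_ne Finset.univ g p
  rw [← Finset.add_sum_erase Finset.univ g (Finset.mem_univ p)] at hsum
  rcases hΛ.exists_mem_subgroup hp hrest hsum with
    hmem | ⟨z, hz, hmem⟩ | ⟨z, hz, hmem⟩ | ⟨z, hz, hmem⟩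
  · exact havoid q 1 1 rfl ⟨g p, hp, by simpa only [one_nsmul] using hmem⟩
  · exact havoid q 2 0 rfl ⟨z, hz, by rwa [zero_nsmul, add_zero, add_comm]⟩
  · exact havoid p 2 0 rfl ⟨z, hz, by rwa [zero_nsmul, add_zero, add_comm]⟩
  · exact havoid p 0 2 rfl ⟨z, hz, by rwa [zero_nsmul, add_zero, add_comm]⟩

end

theorem obstruction_data_implies_not_EPCondition_general
    {Γ : Type} [AddCommGroup Γ] {Λ : Set Γ} {ι : Type*} [Fintype ι] [Nonempty ι]
    (g : ι → Γ) (h₁ h₂ : Γ) (hA3 : (∑ i, g i) + h₁ + h₂ ∈ Λ)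
    (hA4 : ∀ i : ι, ∀ b₁ b₂ : ℕ, b₁ + b₂ = 2 →
      ¬ ∃ z ∈ AddSubgroup.closure (g '' {j | j ≠ i}), z + b₁ • h₁ + b₂ • h₂ ∈ Λ)
    (hA7 : Subsingleton ι → ∀ i : ι,
      (¬ ∃ z ∈ AddSubgroup.zmultiples (g i), z + 2 • h₁ ∈ Λ) ∧
      ¬ ∃ z ∈ AddSubgroup.zmultiples (g i), z + 2 • h₂ ∈ Λ) :
    ¬ EPCondition Λ := by
  rcases subsingleton_or_nontrivial ι with hι | hι
  · obtain ⟨i⟩ := ‹Nonempty ι›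
    have h₁₂ : h₁ + h₂ ∉ Λ := fun hmem ↦
      hA4 i 1 1 rfl ⟨0, zero_mem _, by simpa only [one_nsmul, zero_add] using hmem⟩
    exact not_EPCondition_of_subsingleton i hA3 h₁₂ (hA7 hι i).1 (hA7 hι i).2
  · exact not_EPCondition_of_nontrivial hA3 hA4

/-- If the group-label data `g₁, …, g_m, h₁, h₂` of a `Λ`-obstruction
exist (conditions (A3)–(A5) and (A7), with `S` the nonempty set of indices whose
handlebars are in series), then `Λ` does not satisfy the Erdős–Pósa condition. -/
theorem obstruction_data_implies_not_EPCondition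
    (Γ : Type) [AddCommGroup Γ] [Fintype Γ] (Λ : Set Γ)
    (m : ℕ) (hm : 1 ≤ m) (g : Fin m → Γ) (h₁ h₂ : Γ)
    (S : Set (Fin m)) (hS : S.Nonempty)
    (hA3 : (∑ i, g i) + h₁ + h₂ ∈ Λ)
    (hA4 : ∀ i : Fin m, ∀ b₁ b₂ : ℕ, b₁ + b₂ = 2 →
      ¬ ∃ z ∈ AddSubgroup.closure (g '' {j | j ≠ i}), z + b₁ • h₁ + b₂ • h₂ ∈ Λ)
    (hA5 : ∀ b₁ b₂ : ℕ, b₁ + b₂ = 2 → ∀ cc : Fin m → ℤ,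
      (∑ i, cc i • g i) + b₁ • h₁ + b₂ • h₂ ∈ Λ → ∀ i ∉ S, Odd (cc i))
    (hA7 : m = 1 → ∀ i : Fin m,
      (¬ ∃ z ∈ AddSubgroup.zmultiples (g i), z + 2 • h₁ ∈ Λ) ∧
      ¬ ∃ z ∈ AddSubgroup.zmultiples (g i), z + 2 • h₂ ∈ Λ) :
    ¬ EPCondition Λ := by
  have : Nonempty (Fin m) := hS.to_type
  exact obstruction_data_implies_not_EPCondition_general g h₁ h₂ hA3 hA4
    fun hι ↦ hA7 (hm.antisymm' (Fin.subsingleton_iff_le_one.mp hι))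
end

section
/- Let Γ be a finite abelian group and let Λ ⊆ Γ. Then there exists a Λ-obstruction (for some vertex set A, some positive integer k, and some Γ-labelled graph) if and only if Λ does not satisfy the Erdős–Pósa condition; moreover, if Λ fails the Erdős–Pósa condition, then for every positive integer k there is a Λ-obstruction that is an (A,k)-ribboned wall. -/
/-- A loopless multigraph (parallel edges allowed) whose edges are labelled
by elements of `Γ`: a `Γ`-labelled graph `(G, γ)`. -/
structure LabGraph (V : Type) (Γ : Type) where
  E : Type
  ends : E → Sym2 V
  loopless : ∀ e, ¬ (ends e).IsDiag
  lab : E → Γ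

/-- A path in a labelled multigraph, given by its sequence of (distinct)
vertices `v 0, …, v n` and the traversed edges `e 0, …, e (n-1)`. -/
structure GPath {V Γ : Type} (G : LabGraph V Γ) where
  n : ℕ
  v : Fin (n + 1) → V
  e : Fin n → G.E
  inj : Function.Injective v
  incid : ∀ i : Fin n, G.ends (e i) = s(v i.castSucc, v i.succ)

namespace GPath

variable {V Γ : Type} {G : LabGraph V Γ}

/-- The vertex set of a path. -/
def verts (P : GPath G) : Set V :=
  Set.range P.v

/-- The edge set of a path. -/
def edgeSet (P : GPath G) : Set G.E :=
  Set.range P.e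

/-- The first vertex (one endpoint) of a path. -/
def first (P : GPath G) : V :=
  P.v 0

/-- The last vertex (the other endpoint) of a path. -/
def last (P : GPath G) : V :=
  P.v (Fin.last P.n)

/-- `x` is an internal vertex of the path `P`. -/
def Internal (P : GPath G) (x : V) : Prop :=
  ∃ i : Fin (P.n + 1), P.v i = x ∧ i ≠ 0 ∧ i ≠ Fin.last P.n

/-- The `γ`-length of a path: the sum of the labels of its edges. -/
def glen [AddCommMonoid Γ] (P : GPath G) : Γ :=
  ∑ i, G.lab (P.e i)

/-- `x` occurs strictly before `y` on the path `P`. -/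
def before (P : GPath G) (x y : V) : Prop :=
  ∃ i j : Fin (P.n + 1), i < j ∧ P.v i = x ∧ P.v j = y

end GPath

/-- An `A`-path: a path with at least one edge, both endpoints in `A`,
and internally disjoint from `A`. -/
def IsAPath {V Γ : Type} {G : LabGraph V Γ} (A : Set V) (P : GPath G) : Prop :=
  0 < P.n ∧ P.first ∈ A ∧ P.last ∈ A ∧ ∀ x, P.Internal x → x ∉ A
/-- The two degree-1 vertices deleted from the `[2c] × [r]` grid-wall
(coordinates are 1-indexed). -/
def wallDeleted (c r : ℕ) : Set (ℕ × ℕ) :=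
  {(1, 1), if Odd r then (2 * c, r) else (1, r)}

/-- The vertex set of the elementary `(c, r)`-wall (1-indexed coordinates). -/
def wallVerts (c r : ℕ) : Set (ℕ × ℕ) :=
  {p | 1 ≤ p.1 ∧ p.1 ≤ 2 * c ∧ 1 ≤ p.2 ∧ p.2 ≤ r} \ wallDeleted c r

/-- The adjacency relation of the elementary `(c, r)`-wall: horizontal edges
`(i,j)(i+1,j)` and vertical edges `(i,j)(i,j+1)` for `i + j` odd. -/
def wallAdj (c r : ℕ) (p q : ℕ × ℕ) : Prop :=
  p ∈ wallVerts c r ∧ q ∈ wallVerts c r ∧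
    ((p.2 = q.2 ∧ (q.1 = p.1 + 1 ∨ p.1 = q.1 + 1)) ∨
      (p.1 = q.1 ∧ ((q.2 = p.2 + 1 ∧ Odd (p.1 + p.2)) ∨ (p.2 = q.2 + 1 ∧ Odd (q.1 + q.2)))))

/-- The elementary vertices of the `i`-th column of the elementary wall. -/
def wallColVerts (c r i : ℕ) : Set (ℕ × ℕ) :=
  {p ∈ wallVerts c r | p.1 = 2 * i - 1 ∨ p.1 = 2 * i}

/-- The elementary vertices on the boundary (first and last rows and columns). -/
def wallBoundaryVerts (c r : ℕ) : Set (ℕ × ℕ) :=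
  {p ∈ wallVerts c r | p.1 ≤ 2 ∨ 2 * c - 1 ≤ p.1 ∨ p.2 = 1 ∨ p.2 = r}

/-- A `(c, r)`-wall in the graph `G`: a subdivision of the elementary `(c, r)`-wall.
`nail p` is the branch vertex (nail) corresponding to the elementary vertex `p`, and
`bp p q` is the subdivided branch path realizing the elementary edge `pq`; distinct
branch paths meet only in common nails.  The fields `col1` and `colc` record the
first and the last column of the wall as paths, each oriented starting from its
endpoint in the first row. -/
structure Wall {V Γ : Type} (G : LabGraph V Γ) (c r : ℕ) where
  hc : 3 ≤ c
  hr : 3 ≤ r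
  nail : ℕ × ℕ → V
  bp : ℕ × ℕ → ℕ × ℕ → GPath G
  nail_injOn : Set.InjOn nail (wallVerts c r)
  bp_pos : ∀ p q, wallAdj c r p q → 0 < (bp p q).n
  bp_first : ∀ p q, wallAdj c r p q → (bp p q).first = nail p
  bp_last : ∀ p q, wallAdj c r p q → (bp p q).last = nail q
  bp_symm_v : ∀ p q, wallAdj c r p q → (bp q p).verts = (bp p q).verts
  bp_symm_e : ∀ p q, wallAdj c r p q → (bp q p).edgeSet = (bp p q).edgeSet
  bp_disj : ∀ p q p' q', wallAdj c r p q → wallAdj c r p' q' →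
    ({p, q} : Set (ℕ × ℕ)) ≠ {p', q'} →
    (bp p q).verts ∩ (bp p' q').verts ⊆ nail '' (({p, q} : Set (ℕ × ℕ)) ∩ {p', q'})
  nail_avoid : ∀ p q, wallAdj c r p q → ∀ w ∈ wallVerts c r, w ≠ p → w ≠ q →
    nail w ∉ (bp p q).verts
  col1 : GPath G
  colc : GPath G
  col1_verts : col1.verts =
    {x | ∃ p q, wallAdj c r p q ∧ p ∈ wallColVerts c r 1 ∧ q ∈ wallColVerts c r 1 ∧
      x ∈ (bp p q).verts}
  colc_verts : colc.verts =
    {x | ∃ p q, wallAdj c r p q ∧ p ∈ wallColVerts c r c ∧ q ∈ wallColVerts c r c ∧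
      x ∈ (bp p q).verts}
  col1_edges : ∀ i, ∃ p q, wallAdj c r p q ∧ p ∈ wallColVerts c r 1 ∧
    q ∈ wallColVerts c r 1 ∧ col1.e i ∈ (bp p q).edgeSet
  colc_edges : ∀ i, ∃ p q, wallAdj c r p q ∧ p ∈ wallColVerts c r c ∧
    q ∈ wallColVerts c r c ∧ colc.e i ∈ (bp p q).edgeSet
  col1_first : col1.first = nail (2, 1)
  colc_first : colc.first = nail (2 * c - 1, 1)

namespace Wall

variable {V Γ : Type} {G : LabGraph V Γ} {c r : ℕ}

/-- The vertex set `V(W)` of a wall. -/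
def verts (W : Wall G c r) : Set V :=
  {x | ∃ p q, wallAdj c r p q ∧ x ∈ (W.bp p q).verts}

/-- The edge set `E(W)` of a wall. -/
def edges (W : Wall G c r) : Set G.E :=
  {e | ∃ p q, wallAdj c r p q ∧ e ∈ (W.bp p q).edgeSet}

/-- The set of nails `N^W` of a wall. -/
def nails (W : Wall G c r) : Set V :=
  W.nail '' wallVerts c r

/-- The set of boundary nails `∂N^W` of a wall. -/
def boundaryNails (W : Wall G c r) : Set V :=
  W.nail '' wallBoundaryVerts c r

/-- The vertex set of the `j`-th row of a wall. -/
def rowVerts (W : Wall G c r) (j : ℕ) : Set V :=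
  {x | ∃ p q, wallAdj c r p q ∧ p.2 = j ∧ q.2 = j ∧ x ∈ (W.bp p q).verts}

/-- The vertices on the column-boundary (the first or the last column). -/
def colBoundary (W : Wall G c r) : Set V :=
  W.col1.verts ∪ W.colc.verts

/-- The edges lying on the first or the last column of a wall. -/
def colEdges (W : Wall G c r) : Set G.E :=
  W.col1.edgeSet ∪ W.colc.edgeSet

/-- The linear order `≺_W` restricted to the column-boundary: first column from the
first row downwards, then the last column from the last row upwards. -/
def bLT (W : Wall G c r) (x y : V) : Prop :=
  (x ∈ W.col1.verts ∧ y ∈ W.colc.verts) ∨ W.col1.before x y ∨ W.colc.before y x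

/-- A `W`-path: a path with both endpoints in `V(W)`, internally disjoint from `W`. -/
def IsWPath (W : Wall G c r) (P : GPath G) : Prop :=
  0 < P.n ∧ P.first ∈ W.verts ∧ P.last ∈ W.verts ∧
    (∀ x, P.Internal x → x ∉ W.verts) ∧ ∀ i, P.e i ∉ W.edges

/-- A `W`-handle: a `W`-path with both endpoints on the column-boundary. -/
def IsHandle (W : Wall G c r) (P : GPath G) : Prop :=
  W.IsWPath P ∧ P.first ∈ W.colBoundary ∧ P.last ∈ W.colBoundary

/-- The endpoint pairs of the two handles are in series with respect to `≺_W`. -/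
def SeriesPair (W : Wall G c r) (P Q : GPath G) : Prop :=
  ∃ x₁ x₂ y₁ y₂ : V, ({x₁, x₂} : Set V) = {P.first, P.last} ∧
    ({y₁, y₂} : Set V) = {Q.first, Q.last} ∧ W.bLT x₁ x₂ ∧ W.bLT y₁ y₂ ∧
    (W.bLT x₂ y₁ ∨ W.bLT y₂ x₁)

/-- The endpoint pairs of the two handles are nested with respect to `≺_W`. -/
def NestedPair (W : Wall G c r) (P Q : GPath G) : Prop :=
  ∃ x₁ x₂ y₁ y₂ : V, ({x₁, x₂} : Set V) = {P.first, P.last} ∧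
    ({y₁, y₂} : Set V) = {Q.first, Q.last} ∧ W.bLT x₁ x₂ ∧ W.bLT y₁ y₂ ∧
    ((W.bLT x₁ y₁ ∧ W.bLT y₂ x₂) ∨ (W.bLT y₁ x₁ ∧ W.bLT x₂ y₂))

/-- The endpoint pairs of the two handles are crossing with respect to `≺_W`. -/
def CrossingPair (W : Wall G c r) (P Q : GPath G) : Prop :=
  (({P.first, P.last} : Set V) ∩ {Q.first, Q.last} = ∅) ∧
    ¬ W.SeriesPair P Q ∧ ¬ W.NestedPair P Q

/-- The handles in `S` are pairwise in series. -/
def PureSeries (W : Wall G c r) (S : Set (GPath G)) : Prop :=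
  ∀ P ∈ S, ∀ Q ∈ S, P ≠ Q → W.SeriesPair P Q

/-- The handles in `S` are pairwise nested. -/
def PureNested (W : Wall G c r) (S : Set (GPath G)) : Prop :=
  ∀ P ∈ S, ∀ Q ∈ S, P ≠ Q → W.NestedPair P Q

/-- The handles in `S` are pairwise crossing. -/
def PureCrossing (W : Wall G c r) (S : Set (GPath G)) : Prop :=
  ∀ P ∈ S, ∀ Q ∈ S, P ≠ Q → W.CrossingPair P Q

/-- A (possibly trivial) path contained in the union of the first and last columns. -/
def IsColPath (W : Wall G c r) (R : GPath G) : Prop :=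
  R.verts ⊆ W.colBoundary ∧ ∀ i, R.e i ∈ W.colEdges

/-- `T` is a frame for the family `S` of `W`-handles: `T = V(R) ∪ V(R')` for paths
`R, R'` in `C₁ ∪ C_c` such that every handle in `S` is a `V(R)`–`V(R')`-path. -/
def HandlebarFrame (W : Wall G c r) (S : Set (GPath G)) (T : Set V) : Prop :=
  ∃ R R' : GPath G, W.IsColPath R ∧ W.IsColPath R' ∧ T = R.verts ∪ R'.verts ∧
    ∀ P ∈ S, (P.first ∈ R.verts ∧ P.last ∈ R'.verts) ∨
      (P.first ∈ R'.verts ∧ P.last ∈ R.verts)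

/-- A `W`-handlebar: a set of pairwise disjoint `W`-handles that is pure (pairwise in
series, pairwise nested, or pairwise crossing) and admits a frame. -/
def IsHandlebar (W : Wall G c r) (S : Set (GPath G)) : Prop :=
  (∀ P ∈ S, W.IsHandle P) ∧
  (∀ P ∈ S, ∀ Q ∈ S, P ≠ Q → Disjoint P.verts Q.verts) ∧
  (W.PureSeries S ∨ W.PureNested S ∨ W.PureCrossing S) ∧
  ∃ T, W.HandlebarFrame S T

/-- An `A`-`W`-handle: an `A`-`V(W)`-path whose endpoint in `W` lies on the
column-boundary of `W`. -/
def IsAWHandle (W : Wall G c r) (A : Set V) (P : GPath G) : Prop :=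
  0 < P.n ∧ P.first ∈ A ∧ P.last ∈ W.colBoundary ∧
    (∀ x, P.Internal x → x ∉ A ∧ x ∉ W.verts) ∧ ∀ i, P.e i ∉ W.edges

/-- `T` is a frame for the family `S` of `A`-`W`-handles: `T = V(R)` for a single path
`R` in `C₁ ∪ C_c` containing all the endpoints in `W` of the handles in `S`. -/
def AWFrame (W : Wall G c r) (S : Set (GPath G)) (T : Set V) : Prop :=
  ∃ R : GPath G, W.IsColPath R ∧ T = R.verts ∧ ∀ P ∈ S, P.last ∈ R.verts

/-- An `A`-`W`-handlebar: a set of pairwise disjoint `A`-`W`-handles whose endpoints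
in `W` all lie on the first column or all lie on the last column. -/
def IsAWHandlebar (W : Wall G c r) (A : Set V) (S : Set (GPath G)) : Prop :=
  (∀ P ∈ S, W.IsAWHandle A P) ∧
  (∀ P ∈ S, ∀ Q ∈ S, P ≠ Q → Disjoint P.verts Q.verts) ∧
  ((∀ P ∈ S, P.last ∈ W.col1.verts) ∨ ∀ P ∈ S, P.last ∈ W.colc.verts)

/-- An `N^W`-path contained in the wall `W`. -/
def IsNWPathIn (W : Wall G c r) (P : GPath G) : Prop :=
  0 < P.n ∧ (∀ i, P.e i ∈ W.edges) ∧ P.first ∈ W.nails ∧ P.last ∈ W.nails ∧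
    ∀ x, P.Internal x → x ∉ W.nails

/-- A labelled wall is strongly balanced if every `N^W`-path in `W` has `γ`-length 0. -/
def StronglyBalanced [AddCommGroup Γ] (W : Wall G c r) : Prop :=
  ∀ P : GPath G, W.IsNWPathIn P → P.glen = 0

end Wall
/-- A `Γ`-labelled `(A, k)`-ribboned wall: a wall `W` of order at least `k(m+2)`,
`W`-handlebars `P 0, …, P (m-1)`, and `A`-`W`-handlebars `Q1, Q2`, satisfying the
conditions (A1) and (A2): `Q1` and `Q2` are equal or disjoint, the families are
pairwise disjoint and non-mixing, `|P i| ≥ k` and `|Q j| ≥ 2k`, the wall is strongly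
balanced, and the paths in each family have a common `γ`-length. -/
structure RibbonedWall {V Γ : Type} [AddCommGroup Γ] (G : LabGraph V Γ)
    (A : Set V) (k : ℕ) where
  c : ℕ
  r : ℕ
  W : Wall G c r
  m : ℕ
  P : Fin m → Set (GPath G)
  Q1 : Set (GPath G)
  Q2 : Set (GPath G)
  g : Fin m → Γ
  h1 : Γ
  h2 : Γ
  wall_order : k * (m + 2) ≤ min c r
  hb : ∀ i, W.IsHandlebar (P i)
  hq1 : W.IsAWHandlebar A Q1
  hq2 : W.IsAWHandlebar A Q2
  q_eq_or_disj : Q1 = Q2 ∨ ∀ p ∈ Q1, ∀ q ∈ Q2, Disjoint p.verts q.verts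
  fam_disj : ∀ i j, i ≠ j → ∀ p ∈ P i, ∀ q ∈ P j, Disjoint p.verts q.verts
  fam_disj_q : ∀ i, ∀ p ∈ P i, ∀ q ∈ Q1 ∪ Q2, Disjoint p.verts q.verts
  nonmix : ∃ (T : Fin m → Set V) (T1 T2 : Set V),
    (∀ i, W.HandlebarFrame (P i) (T i)) ∧ W.AWFrame Q1 T1 ∧ W.AWFrame Q2 T2 ∧
      (∀ i j, i ≠ j → Disjoint (T i) (T j)) ∧ ∀ i, Disjoint (T i) (T1 ∪ T2)
  card_P : ∀ i, ∃ inj : Fin k → GPath G, Function.Injective inj ∧ ∀ t, inj t ∈ P i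
  card_Q1 : ∃ inj : Fin (2 * k) → GPath G, Function.Injective inj ∧ ∀ t, inj t ∈ Q1
  card_Q2 : ∃ inj : Fin (2 * k) → GPath G, Function.Injective inj ∧ ∀ t, inj t ∈ Q2
  balanced : W.StronglyBalanced
  lenP : ∀ i, ∀ p ∈ P i, p.glen = g i
  lenQ1 : ∀ p ∈ Q1, p.glen = h1
  lenQ2 : ∀ p ∈ Q2, p.glen = h2

namespace RibbonedWall

variable {V Γ : Type} [AddCommGroup Γ] {G : LabGraph V Γ} {A : Set V} {k : ℕ}

/-- The vertex set of the graph `G(R) = W ∪ P₁ ∪ ⋯ ∪ P_m ∪ Q₁ ∪ Q₂`. -/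
def vertexSet (R : RibbonedWall G A k) : Set V :=
  R.W.verts ∪ (⋃ i, ⋃ p ∈ R.P i, GPath.verts p) ∪ ⋃ p ∈ R.Q1 ∪ R.Q2, GPath.verts p

/-- The edge set of the graph `G(R)`. -/
def edgeSetR (R : RibbonedWall G A k) : Set G.E :=
  R.W.edges ∪ (⋃ i, ⋃ p ∈ R.P i, GPath.edgeSet p) ∪ ⋃ p ∈ R.Q1 ∪ R.Q2, GPath.edgeSet p

/-- A path of `G` lies in the graph `G(R)`. -/
def ContainsPath (R : RibbonedWall G A k) (p : GPath G) : Prop :=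
  p.verts ⊆ R.vertexSet ∧ p.edgeSet ⊆ R.edgeSetR

/-- Conditions (A3)–(A5): the ribboned wall is `Λ`-irreducible. -/
def Irreducible (R : RibbonedWall G A k) (Λ : Set Γ) : Prop :=
  ((∑ i, R.g i) + R.h1 + R.h2 ∈ Λ) ∧
  (∀ i : Fin R.m, ∀ b₁ b₂ : ℕ, b₁ + b₂ = 2 →
    ¬ ∃ z ∈ AddSubgroup.closure (R.g '' {j | j ≠ i}), z + b₁ • R.h1 + b₂ • R.h2 ∈ Λ) ∧
  ∀ b₁ b₂ : ℕ, b₁ + b₂ = 2 → ∀ cc : Fin R.m → ℤ,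
    (∑ i, cc i • R.g i) + b₁ • R.h1 + b₂ • R.h2 ∈ Λ →
    ∀ i, ¬ R.W.PureSeries (R.P i) → Odd (cc i)

/-- Conditions (A3)–(A7): the ribboned wall is a `Λ`-obstruction. -/
def IsObstruction (R : RibbonedWall G A k) (Λ : Set Γ) : Prop :=
  R.Irreducible Λ ∧
  (∃ i, R.W.PureSeries (R.P i)) ∧
  (R.m = 1 → ∀ i : Fin R.m,
    (¬ ∃ z ∈ AddSubgroup.zmultiples (R.g i), z + 2 • R.h1 ∈ Λ) ∧
    ¬ ∃ z ∈ AddSubgroup.zmultiples (R.g i), z + 2 • R.h2 ∈ Λ)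

end RibbonedWall

/-!
Let `gᵢ` be the handle lengths and `h₁, h₂` the end lengths of a `Λ`-obstruction. Then (EP1)
applied to `h₁`, `h₂`, `∑ gᵢ` yields an element `2 hⱼ + n ∑ gᵢ` of `Λ`, as `h₁ + h₂ ∈ Λ` is excluded
by (A4). For a single handlebar such an element is excluded by (A7); for several, (EP2) applied to
`hⱼ`, `n gᵢ` and the rest of `n ∑ gᵢ` contradicts (A4).

Conversely, an elementary wall whose edges have length `0` carries handlebars in series of any
prescribed lengths, each handle being an edge parallel to an edge of the first column. A triple
violating (EP1) gives an obstruction with one handlebar, a triple violating (EP2) one with two.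
-/

/-! ### Paths -/

namespace GPath

variable {V Γ : Type} {G : LabGraph V Γ}

/-- The path with one vertex. -/
def nil (p : V) : GPath G where
  n := 0
  v _ := p
  e i := i.elim0
  inj _ _ _ := Subsingleton.elim (α := Fin 1) _ _
  incid i := i.elim0

/-- The path with one edge `e`, oriented from `p` to `q`. -/
def ofEdge (e : G.E) {p q : V} (he : G.ends e = s(p, q)) : GPath G where
  n := 1
  v := ![p, q]
  e _ := e
  inj := by
    have hpq : p ≠ q := by simpa [he] using G.loopless e
    intro i j hij
    fin_cases i <;> fin_cases j <;> simp_all [eq_comm]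
  incid i := by
    fin_cases i
    exact he

/-- The path `f a, f (a + 1), …, f (a + n)` cut out of an infinite ray with vertices `f t` and
edges `e t`. -/
def ofRay (f : ℕ → V) (hf : Function.Injective f) (e : ℕ → G.E)
    (he : ∀ t, G.ends (e t) = s(f t, f (t + 1))) (a n : ℕ) : GPath G where
  n := n
  v i := f (a + i)
  e i := e (a + i)
  inj i j hij := by
    have := hf hij
    ext
    omega
  incid i := he (a + i)

lemma ofEdge_verts (e : G.E) {p q : V} (he : G.ends e = s(p, q)) :
    (ofEdge e he).verts = {p, q} :=
  Matrix.range_cons_cons_empty p q _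

lemma ofEdge_edgeSet (e : G.E) {p q : V} (he : G.ends e = s(p, q)) :
    (ofEdge e he).edgeSet = {e} :=
  Set.range_const (ι := Fin 1)

lemma ofEdge_glen [AddCommMonoid Γ] (e : G.E) {p q : V} (he : G.ends e = s(p, q)) :
    (ofEdge e he).glen = G.lab e :=
  Fin.sum_univ_one fun _ => G.lab e

lemma ofEdge_not_internal (e : G.E) {p q : V} (he : G.ends e = s(p, q)) (x : V) :
    ¬ (ofEdge e he).Internal x := by
  rintro ⟨i, -, hfirst, hlast⟩
  change Fin 2 at i
  fin_cases i
  exacts [hfirst rfl, hlast rfl]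

lemma ofRay_verts (f : ℕ → V) (hf : Function.Injective f) (e : ℕ → G.E)
    (he : ∀ t, G.ends (e t) = s(f t, f (t + 1))) (a n : ℕ) :
    (ofRay f hf e he a n).verts = f '' Set.Icc a (a + n) := by
  ext x
  constructor
  · rintro ⟨i, rfl⟩
    have : (i : ℕ) < n + 1 := i.2
    exact ⟨a + i, ⟨by omega, by omega⟩, rfl⟩
  · rintro ⟨t, ⟨hat, htn⟩, rfl⟩
    exact ⟨⟨t - a, show t - a < n + 1 by omega⟩, congrArg f (Nat.add_sub_cancel' hat)⟩

end GPath

namespace Wall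

variable {V Γ : Type} {G : LabGraph V Γ} {c r : ℕ} (W : Wall G c r)

lemma colBoundary_subset_verts : W.colBoundary ⊆ W.verts := by
  rintro x (hx | hx)
  · rw [W.col1_verts] at hx
    obtain ⟨p, q, hpq, -, -, hx⟩ := hx
    exact ⟨p, q, hpq, hx⟩
  · rw [W.colc_verts] at hx
    obtain ⟨p, q, hpq, -, -, hx⟩ := hx
    exact ⟨p, q, hpq, hx⟩

lemma isColPath_colc : W.IsColPath W.colc :=
  ⟨Set.subset_union_right, fun i => Or.inr ⟨i, rfl⟩⟩

variable {W}

lemma isHandle_ofEdge {e : G.E} {p q : V} (he : G.ends e = s(p, q)) (heW : e ∉ W.edges)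
    (hp : p ∈ W.colBoundary) (hq : q ∈ W.colBoundary) : W.IsHandle (GPath.ofEdge e he) :=
  ⟨⟨Nat.one_pos, W.colBoundary_subset_verts hp, W.colBoundary_subset_verts hq,
    fun x hx => (GPath.ofEdge_not_internal e he x hx).elim, fun _ => heW⟩, hp, hq⟩

lemma isAWHandle_ofEdge {A : Set V} {e : G.E} {p q : V} (he : G.ends e = s(p, q))
    (heW : e ∉ W.edges) (hp : p ∈ A) (hq : q ∈ W.colBoundary) :
    W.IsAWHandle A (GPath.ofEdge e he) :=
  ⟨Nat.one_pos, hp, hq, fun x hx => (GPath.ofEdge_not_internal e he x hx).elim, fun _ => heW⟩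

end Wall

/-! ### The ambient graph -/

namespace LabGraph

variable {V Γ : Type} [Zero Γ]

/-- The multigraph in which any two distinct vertices are joined by one edge tagged `none`, of
label `0`, and by one edge tagged `some x` for each label `x`. Walls are built from the edges tagged
`none` and handles from the others, so that no handle uses an edge of a wall. -/
def complete (V Γ : Type) [Zero Γ] : LabGraph V Γ where
  E := {s : Sym2 V // ¬ s.IsDiag} × Option Γ
  ends e := e.1
  loopless e := e.1.2
  lab e := e.2.getD 0

/-- The edge of `complete V Γ` between `p` and `q` with tag `x`. -/
def completeEdge {p q : V} (hpq : p ≠ q) (x : Option Γ) : (complete V Γ).E :=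
  (⟨s(p, q), hpq⟩, x)

lemma completeEdge_comm {p q : V} (hpq : p ≠ q) (x : Option Γ) :
    completeEdge hpq x = completeEdge hpq.symm x :=
  Prod.ext (Subtype.ext Sym2.eq_swap) rfl

lemma completeEdge_ends {p q : V} (hpq : p ≠ q) (x : Option Γ) :
    (complete V Γ).ends (completeEdge hpq x) = s(p, q) :=
  rfl

/-- The path in `complete V Γ` consisting of the edge tagged `x` from `p` to `q`. -/
def edgePath {p q : V} (hpq : p ≠ q) (x : Option Γ) : GPath (complete V Γ) :=
  GPath.ofEdge (completeEdge hpq x) (completeEdge_ends hpq x)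

/-- The branch paths of walls in `complete V Γ`: single edges tagged `none`. The case `p = q` is
a junk value. -/
def branchPath [DecidableEq V] (p q : V) : GPath (complete V Γ) :=
  if hpq : p ≠ q then edgePath hpq none else GPath.nil p

/-- The path `f a, …, f (a + n)` in `complete V Γ` along edges tagged `none`. -/
def rayPath (f : ℕ → V) (hf : Function.Injective f) (a n : ℕ) : GPath (complete V Γ) :=
  GPath.ofRay f hf (fun t => completeEdge (hf.ne t.succ_ne_self.symm) none)
    (fun _ => completeEdge_ends _ _) a n

lemma edgePath_verts {p q : V} (hpq : p ≠ q) (x : Option Γ) : (edgePath hpq x).verts = {p, q} :=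
  GPath.ofEdge_verts _ _

lemma edgePath_edgeSet {p q : V} (hpq : p ≠ q) (x : Option Γ) :
    (edgePath hpq x).edgeSet = {completeEdge hpq x} :=
  GPath.ofEdge_edgeSet _ _

lemma edgePath_some_glen {Γ : Type} [AddCommMonoid Γ] {p q : V} (hpq : p ≠ q) (x : Γ) :
    (edgePath hpq (some x)).glen = x :=
  GPath.ofEdge_glen _ _

lemma branchPath_of_ne [DecidableEq V] {p q : V} (hpq : p ≠ q) :
    (branchPath p q : GPath (complete V Γ)) = edgePath hpq none :=
  dif_pos hpq

lemma branchPath_verts [DecidableEq V] {p q : V} (hpq : p ≠ q) :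
    (branchPath p q : GPath (complete V Γ)).verts = {p, q} := by
  rw [branchPath_of_ne hpq, edgePath_verts]

lemma branchPath_edgeSet [DecidableEq V] {p q : V} (hpq : p ≠ q) :
    (branchPath p q : GPath (complete V Γ)).edgeSet = {completeEdge hpq none} := by
  rw [branchPath_of_ne hpq, edgePath_edgeSet]

lemma rayPath_verts (f : ℕ → V) (hf : Function.Injective f) (a n : ℕ) :
    (rayPath f hf a n : GPath (complete V Γ)).verts = f '' Set.Icc a (a + n) :=
  GPath.ofRay_verts _ _ _ _ _ _

end LabGraph

open LabGraph

/-! ### Elementary walls -/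

lemma wallAdj.ne {c r : ℕ} {p q : ℕ × ℕ} (h : wallAdj c r p q) : p ≠ q := by
  rintro rfl
  obtain ⟨-, -, h⟩ := h
  omega

lemma mk_mem_wallVerts {c r x y : ℕ} :
    (x, y) ∈ wallVerts c r ↔ (1 ≤ x ∧ x ≤ 2 * c ∧ 1 ≤ y ∧ y ≤ r) ∧ ¬ (x = 1 ∧ y = 1) ∧
      ¬ (r % 2 = 1 ∧ x = 2 * c ∧ y = r) ∧ ¬ (r % 2 = 0 ∧ x = 1 ∧ y = r) := by
  rcases Nat.mod_two_eq_zero_or_one r with hr | hr <;>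
    simp [wallVerts, wallDeleted, Nat.odd_iff, hr]

lemma mk_mem_wallColVerts {c r i x y : ℕ} :
    (x, y) ∈ wallColVerts c r i ↔ (x, y) ∈ wallVerts c r ∧ (x = 2 * i - 1 ∨ x = 2 * i) :=
  Iff.rfl

/-- `f 0, …, f n` are the vertices of the `i`-th column of the elementary `(c, r)`-wall in the order
in which the column path visits them. Injectivity is asked of all of `f`, so that `f` is a ray of
which the column is an initial segment. -/
structure IsColumnTraversal (c r i n : ℕ) (f : ℕ → ℕ × ℕ) : Prop where
  injective : Function.Injective f
  image_Icc : f '' Set.Icc 0 n = wallColVerts c r i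
  adj : ∀ t < n, wallAdj c r (f t) (f (t + 1))

namespace IsColumnTraversal

variable {c r i n : ℕ} {f : ℕ → ℕ × ℕ} {Γ : Type} [Zero Γ]

lemma mem_wallColVerts (hf : IsColumnTraversal c r i n f) {t : ℕ} (ht : t ≤ n) :
    f t ∈ wallColVerts c r i :=
  hf.image_Icc ▸ ⟨t, ⟨t.zero_le, ht⟩, rfl⟩

lemma rayPath_verts (hf : IsColumnTraversal c r i n f) (hn : 0 < n) :
    (rayPath f hf.injective 0 n : GPath (complete _ Γ)).verts =
      {x | ∃ p q, wallAdj c r p q ∧ p ∈ wallColVerts c r i ∧ q ∈ wallColVerts c r i ∧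
        x ∈ (branchPath p q : GPath (complete _ Γ)).verts} := by
  rw [LabGraph.rayPath_verts, Nat.zero_add]
  ext x
  constructor
  · rintro ⟨t, ⟨-, htn⟩, rfl⟩
    obtain ⟨s, hs, hts⟩ : ∃ s < n, t = s ∨ t = s + 1 := by
      rcases htn.lt_or_eq with htn | rfl
      exacts [⟨t, htn, Or.inl rfl⟩, ⟨t - 1, by omega, by omega⟩]
    refine ⟨f s, f (s + 1), hf.adj s hs, hf.mem_wallColVerts hs.le, hf.mem_wallColVerts hs, ?_⟩
    rw [branchPath_verts (hf.adj s hs).ne]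
    exact hts.imp (congrArg f) (congrArg f)
  · rintro ⟨p, q, hpq, hp, hq, hx⟩
    rw [branchPath_verts hpq.ne] at hx
    rw [hf.image_Icc]
    rcases hx with rfl | rfl <;> assumption

lemma rayPath_edges (hf : IsColumnTraversal c r i n f)
    (t : Fin (rayPath f hf.injective 0 n : GPath (complete _ Γ)).n) :
    ∃ p q, wallAdj c r p q ∧ p ∈ wallColVerts c r i ∧ q ∈ wallColVerts c r i ∧
      (rayPath f hf.injective 0 n).e t ∈ (branchPath p q : GPath (complete _ Γ)).edgeSet := by
  have htn : 0 + (t : ℕ) < n := (Nat.zero_add _).trans_lt t.2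
  have hadj := hf.adj _ htn
  refine ⟨_, _, hadj, hf.mem_wallColVerts htn.le, hf.mem_wallColVerts htn, ?_⟩
  rw [branchPath_edgeSet hadj.ne]
  rfl

end IsColumnTraversal

/-- The first column of an elementary wall from the first row downwards, as a ray:
`(2,1), (2,2), (1,2), (1,3), (2,3), (2,4), …`. -/
def firstColumn (t : ℕ) : ℕ × ℕ :=
  (if t % 4 < 2 then 2 else 1, (t + 1) / 2 + 1)

/-- The last column of an elementary wall with `c` columns from the first row downwards, as a ray:
`(2c-1,1), (2c,1), (2c,2), (2c-1,2), (2c-1,3), (2c,3), …`. -/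
def lastColumn (c t : ℕ) : ℕ × ℕ :=
  (if 1 ≤ t % 4 ∧ t % 4 ≤ 2 then 2 * c else 2 * c - 1, t / 2 + 1)

lemma firstColumn_injective : Function.Injective firstColumn := by
  intro s t h
  simp only [firstColumn, Prod.mk.injEq] at h
  split_ifs at h <;> omega

lemma lastColumn_injective {c : ℕ} (hc : 0 < c) : Function.Injective (lastColumn c) := by
  intro s t h
  simp only [lastColumn, Prod.mk.injEq] at h
  split_ifs at h <;> omega

lemma firstColumn_fst_le (t : ℕ) : (firstColumn t).1 ≤ 2 := by
  unfold firstColumn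
  dsimp only
  split_ifs <;> omega

lemma le_lastColumn_fst (c t : ℕ) : 2 * c - 1 ≤ (lastColumn c t).1 := by
  unfold lastColumn
  dsimp only
  split_ifs <;> omega

lemma lastColumn_fst_le (c t : ℕ) : (lastColumn c t).1 ≤ 2 * c := by
  unfold lastColumn
  dsimp only
  split_ifs <;> omega

lemma image_firstColumn {c r : ℕ} (hc : 1 < c) (hr : 1 < r) :
    firstColumn '' Set.Icc 0 (2 * r - 3 + r % 2) = wallColVerts c r 1 := by
  ext ⟨x, y⟩
  rw [mk_mem_wallColVerts, mk_mem_wallVerts]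
  constructor
  · rintro ⟨t, ⟨-, ht⟩, h⟩
    simp only [firstColumn, Prod.mk.injEq] at h
    split_ifs at h <;> omega
  · intro h
    refine ⟨if (x + y) % 2 = 1 then 2 * y - 2 else 2 * y - 3, ⟨Nat.zero_le _, ?_⟩, ?_⟩
    · split_ifs <;> omega
    · simp only [firstColumn, Prod.mk.injEq]
      split_ifs <;> omega

lemma image_lastColumn {c r : ℕ} (hc : 1 < c) (hr : 1 < r) :
    lastColumn c '' Set.Icc 0 (2 * r - 1 - r % 2) = wallColVerts c r c := by
  ext ⟨x, y⟩
  rw [mk_mem_wallColVerts, mk_mem_wallVerts]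
  constructor
  · rintro ⟨t, ⟨-, ht⟩, h⟩
    simp only [lastColumn, Prod.mk.injEq] at h
    split_ifs at h <;> omega
  · intro h
    refine ⟨if (x + y) % 2 = 1 then 2 * y - 1 else 2 * y - 2, ⟨Nat.zero_le _, ?_⟩, ?_⟩
    · split_ifs <;> omega
    · simp only [lastColumn, Prod.mk.injEq]
      split_ifs <;> omega

lemma isColumnTraversal_firstColumn {c r : ℕ} (hc : 1 < c) (hr : 1 < r) :
    IsColumnTraversal c r 1 (2 * r - 3 + r % 2) firstColumn where
  injective := firstColumn_injective
  image_Icc := image_firstColumn hc hr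
  adj t ht := by
    have hmem {s : ℕ} (hs : s ≤ 2 * r - 3 + r % 2) : firstColumn s ∈ wallVerts c r :=
      ((image_firstColumn hc hr).subset ⟨s, ⟨s.zero_le, hs⟩, rfl⟩).1
    refine ⟨hmem ht.le, hmem ht, ?_⟩
    simp only [firstColumn, Nat.odd_iff]
    split_ifs <;> omega

lemma isColumnTraversal_lastColumn {c r : ℕ} (hc : 1 < c) (hr : 1 < r) :
    IsColumnTraversal c r c (2 * r - 1 - r % 2) (lastColumn c) where
  injective := lastColumn_injective (by omega)
  image_Icc := image_lastColumn hc hr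
  adj t ht := by
    have hmem {s : ℕ} (hs : s ≤ 2 * r - 1 - r % 2) : lastColumn c s ∈ wallVerts c r :=
      ((image_lastColumn hc hr).subset ⟨s, ⟨s.zero_le, hs⟩, rfl⟩).1
    refine ⟨hmem ht.le, hmem ht, ?_⟩
    simp only [lastColumn, Nat.odd_iff]
    split_ifs <;> omega

/-- The elementary `(c, r)`-wall, realised in the complete labelled multigraph on `ℕ × ℕ` by edges
tagged `none`. -/
def elementaryWall (Γ : Type) [Zero Γ] {c r : ℕ} (hc : 3 ≤ c) (hr : 3 ≤ r) :
    Wall (complete (ℕ × ℕ) Γ) c r where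
  hc := hc
  hr := hr
  nail := id
  bp := branchPath
  nail_injOn := Function.injective_id.injOn
  bp_pos p q h := by rw [branchPath_of_ne h.ne]; exact Nat.one_pos
  bp_first p q h := by rw [branchPath_of_ne h.ne]; rfl
  bp_last p q h := by rw [branchPath_of_ne h.ne]; rfl
  bp_symm_v p q h := by
    rw [branchPath_verts h.ne, branchPath_verts h.ne.symm, Set.pair_comm]
  bp_symm_e p q h := by
    rw [branchPath_edgeSet h.ne, branchPath_edgeSet h.ne.symm, completeEdge_comm]
  bp_disj p q p' q' h h' _ := by
    rw [branchPath_verts h.ne, branchPath_verts h'.ne, Set.image_id]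
  nail_avoid p q h w _ hwp hwq := by
    rw [branchPath_verts h.ne]
    simp [hwp, hwq]
  col1 := rayPath firstColumn firstColumn_injective 0 (2 * r - 3 + r % 2)
  colc := rayPath (lastColumn c) (lastColumn_injective (by omega)) 0 (2 * r - 1 - r % 2)
  col1_verts :=
    (isColumnTraversal_firstColumn (by omega) (by omega)).rayPath_verts (by omega)
  colc_verts :=
    (isColumnTraversal_lastColumn (by omega) (by omega)).rayPath_verts (by omega)
  col1_edges := (isColumnTraversal_firstColumn (by omega) (by omega)).rayPath_edges
  colc_edges := (isColumnTraversal_lastColumn (by omega) (by omega)).rayPath_edges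
  col1_first := by simp [GPath.first, rayPath, GPath.ofRay, firstColumn]
  colc_first := by simp [GPath.first, rayPath, GPath.ofRay, lastColumn]

section ElementaryWall

variable {Γ : Type} {c r : ℕ} (hc : 3 ≤ c) (hr : 3 ≤ r)

lemma tag_eq_none_of_mem_elementaryWall_edges [Zero Γ] {e : (complete (ℕ × ℕ) Γ).E}
    (he : e ∈ (elementaryWall Γ hc hr).edges) : e.2 = none := by
  obtain ⟨p, q, hpq, he⟩ := he
  change e ∈ (branchPath p q).edgeSet at he
  rw [branchPath_edgeSet hpq.ne] at he
  exact congrArg Prod.snd he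

lemma completeEdge_some_notMem_elementaryWall_edges [Zero Γ] {p q : ℕ × ℕ} (hpq : p ≠ q) (x : Γ) :
    completeEdge hpq (some x) ∉ (elementaryWall Γ hc hr).edges :=
  fun h => Option.some_ne_none x (tag_eq_none_of_mem_elementaryWall_edges hc hr h)

lemma stronglyBalanced_elementaryWall [AddCommGroup Γ] :
    (elementaryWall Γ hc hr).StronglyBalanced := by
  rintro P ⟨-, hP, -⟩
  refine Finset.sum_eq_zero fun i _ => ?_
  exact congrArg (Option.getD · 0) (tag_eq_none_of_mem_elementaryWall_edges hc hr (hP i))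

variable [Zero Γ]

lemma firstColumn_mem_col1 {t : ℕ} (ht : t ≤ 2 * r - 3) :
    firstColumn t ∈ (elementaryWall Γ hc hr).col1.verts := by
  rw [elementaryWall, rayPath_verts]
  exact ⟨t, ⟨t.zero_le, by omega⟩, rfl⟩

lemma elementaryWall_colc_verts : (elementaryWall Γ hc hr).colc.verts =
    lastColumn c '' Set.Icc 0 (2 * r - 1 - r % 2) := by
  rw [elementaryWall, rayPath_verts, Nat.zero_add]

lemma lastColumn_mem_colc {t : ℕ} (ht : t ≤ 2 * r - 2) :
    lastColumn c t ∈ (elementaryWall Γ hc hr).colc.verts := by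
  rw [elementaryWall_colc_verts]
  exact ⟨t, ⟨t.zero_le, by omega⟩, rfl⟩

lemma bLT_firstColumn {s t : ℕ} (hst : s < t) (ht : t ≤ 2 * r - 3) :
    (elementaryWall Γ hc hr).bLT (firstColumn s) (firstColumn t) := by
  have hlt {u : ℕ} (hu : u ≤ t) : u < 2 * r - 3 + r % 2 + 1 := by omega
  exact Or.inr (Or.inl ⟨⟨s, hlt hst.le⟩, ⟨t, hlt le_rfl⟩, hst,
    congrArg firstColumn s.zero_add, congrArg firstColumn t.zero_add⟩)

lemma isColPath_rayPath_firstColumn {a n : ℕ} (h : a + n ≤ 2 * r - 3) :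
    (elementaryWall Γ hc hr).IsColPath (rayPath firstColumn firstColumn_injective a n) := by
  constructor
  · rw [rayPath_verts]
    rintro _ ⟨t, ht, rfl⟩
    exact Or.inl (firstColumn_mem_col1 hc hr (ht.2.trans h))
  · intro i
    have hi : (i : ℕ) < n := i.2
    have hlt : a + (i : ℕ) < 2 * r - 3 + r % 2 := by omega
    refine Or.inl ⟨⟨a + i, hlt⟩, ?_⟩
    simp [elementaryWall, rayPath, GPath.ofRay]

end ElementaryWall

/-! ### Handlebars on elementary walls -/

section Handles

variable {Γ : Type} [Zero Γ]

/-- The `s`-th handle of length `x` on the first column: an edge parallel to the `2s`-th edge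
of the column. Odd-numbered edges are skipped so that distinct handles are disjoint. -/
def firstColumnHandle (x : Γ) (s : ℕ) : GPath (complete (ℕ × ℕ) Γ) :=
  edgePath (firstColumn_injective.ne (2 * s).succ_ne_self.symm) (some x)

/-- The set `A` of the ribboned walls constructed here, a column of vertices to the right of the
elementary wall with `c` columns. -/
def terminals (c : ℕ) : Set (ℕ × ℕ) :=
  {p | p.1 = 2 * c + 1}

lemma mk_ne_lastColumn (c s t : ℕ) : (2 * c + 1, s) ≠ lastColumn c t := by
  intro h
  have := lastColumn_fst_le c t
  rw [← h] at this
  exact absurd this (Nat.lt_irrefl _)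

/-- The edge of length `x` from the `s`-th terminal to the `s`-th vertex of the last column. -/
def lastColumnHandle (c : ℕ) (x : Γ) (s : ℕ) : GPath (complete (ℕ × ℕ) Γ) :=
  edgePath (mk_ne_lastColumn c s s) (some x)

lemma firstColumnHandle_verts (x : Γ) (s : ℕ) :
    (firstColumnHandle x s).verts = firstColumn '' Set.Ico (2 * s) (2 * (s + 1)) := by
  have hIco : Set.Ico (2 * s) (2 * (s + 1)) = {2 * s, 2 * s + 1} := by
    ext t
    simp only [Set.mem_Ico, Set.mem_insert_iff, Set.mem_singleton_iff]
    omega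
  rw [hIco, Set.image_pair, firstColumnHandle, edgePath_verts]

lemma lastColumnHandle_verts (c : ℕ) (x : Γ) (s : ℕ) :
    (lastColumnHandle c x s).verts = {(2 * c + 1, s), lastColumn c s} :=
  edgePath_verts _ _

lemma firstColumnHandle_injective (x : Γ) : Function.Injective (firstColumnHandle x) := by
  intro s t h
  have : 2 * s = 2 * t := firstColumn_injective (congrArg GPath.first h)
  omega

lemma lastColumnHandle_injective (c : ℕ) (x : Γ) : Function.Injective (lastColumnHandle c x) :=
  fun _ _ h => congrArg Prod.snd (congrArg GPath.first h)

lemma disjoint_image_firstColumn {a b a' b' : ℕ} (h : b ≤ a' ∨ b' ≤ a) :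
    Disjoint (firstColumn '' Set.Ico (2 * a) (2 * b))
      (firstColumn '' Set.Ico (2 * a') (2 * b')) := by
  rw [Set.disjoint_image_iff firstColumn_injective, Set.Ico_disjoint_Ico]
  omega

lemma disjoint_firstColumnHandle {s t : ℕ} (hst : s ≠ t) (x y : Γ) :
    Disjoint (firstColumnHandle x s).verts (firstColumnHandle y t).verts := by
  simp only [firstColumnHandle_verts]
  exact disjoint_image_firstColumn (by omega)

lemma disjoint_lastColumnHandle {c : ℕ} (hc : 0 < c) {s t : ℕ} (hst : s ≠ t) (x y : Γ) :
    Disjoint (lastColumnHandle c x s).verts (lastColumnHandle c y t).verts := by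
  simp only [lastColumnHandle_verts, Set.disjoint_insert_left, Set.disjoint_singleton_left,
    Set.mem_insert_iff, Set.mem_singleton_iff, not_or]
  exact ⟨⟨by simpa using hst, mk_ne_lastColumn c s t⟩,
    (mk_ne_lastColumn c t s).symm, (lastColumn_injective hc).ne hst⟩

lemma disjoint_image_firstColumn_of_lt_fst (S : Set ℕ) {T : Set (ℕ × ℕ)} (hT : ∀ p ∈ T, 2 < p.1) :
    Disjoint (firstColumn '' S) T := by
  rw [Set.disjoint_left]
  rintro _ ⟨t, -, rfl⟩ ht
  exact (firstColumn_fst_le t).not_gt (hT _ ht)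

lemma two_lt_lastColumn_fst {c : ℕ} (hc : 2 ≤ c) (t : ℕ) : 2 < (lastColumn c t).1 := by
  have := le_lastColumn_fst c t
  omega

lemma disjoint_firstColumnHandle_lastColumnHandle {c : ℕ} (hc : 2 ≤ c) (x y : Γ) (s t : ℕ) :
    Disjoint (firstColumnHandle x s).verts (lastColumnHandle c y t).verts := by
  rw [firstColumnHandle_verts, lastColumnHandle_verts]
  refine disjoint_image_firstColumn_of_lt_fst _ ?_
  rintro _ (rfl | rfl)
  · dsimp only
    omega
  · exact two_lt_lastColumn_fst hc t

variable {c r : ℕ} (hc : 3 ≤ c) (hr : 3 ≤ r) (x : Γ)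

lemma isHandle_firstColumnHandle {s : ℕ} (hs : s + 1 < r) :
    (elementaryWall Γ hc hr).IsHandle (firstColumnHandle x s) :=
  Wall.isHandle_ofEdge (completeEdge_ends _ _)
    (completeEdge_some_notMem_elementaryWall_edges hc hr _ x)
    (Or.inl (firstColumn_mem_col1 hc hr (by omega)))
    (Or.inl (firstColumn_mem_col1 hc hr (by omega)))

lemma isAWHandle_lastColumnHandle {s : ℕ} (hs : s + 1 < 2 * r) :
    (elementaryWall Γ hc hr).IsAWHandle (terminals c) (lastColumnHandle c x s) :=
  Wall.isAWHandle_ofEdge (completeEdge_ends _ _)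
    (completeEdge_some_notMem_elementaryWall_edges hc hr _ x) rfl
    (Or.inr (lastColumn_mem_colc hc hr (by omega)))

lemma seriesPair_firstColumnHandle {s t : ℕ} (hst : s ≠ t) (hs : s + 1 < r) (ht : t + 1 < r) :
    (elementaryWall Γ hc hr).SeriesPair (firstColumnHandle x s) (firstColumnHandle x t) := by
  have hlt {u v : ℕ} (huv : u < v) (hv : v ≤ 2 * r - 3) := bLT_firstColumn (Γ := Γ) hc hr huv hv
  exact ⟨firstColumn (2 * s), firstColumn (2 * s + 1), firstColumn (2 * t), firstColumn (2 * t + 1),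
    rfl, rfl, hlt (by omega) (by omega), hlt (by omega) (by omega),
    hst.lt_or_gt.imp (fun _ => hlt (by omega) (by omega)) fun _ => hlt (by omega) (by omega)⟩

/-- The handles number `a, …, b - 1` on the first column. -/
def firstColumnHandlebar (x : Γ) (a b : ℕ) : Set (GPath (complete (ℕ × ℕ) Γ)) :=
  firstColumnHandle x '' Set.Ico a b

/-- The handles number `a, …, b - 1` on the last column. -/
def lastColumnHandlebar (c : ℕ) (x : Γ) (a b : ℕ) : Set (GPath (complete (ℕ × ℕ) Γ)) :=
  lastColumnHandle c x '' Set.Ico a b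

variable {a b : ℕ}

lemma pureSeries_firstColumnHandlebar (hb : b < r) :
    (elementaryWall Γ hc hr).PureSeries (firstColumnHandlebar x a b) := by
  rintro _ ⟨s, hs, rfl⟩ _ ⟨t, ht, rfl⟩ hst
  exact seriesPair_firstColumnHandle hc hr x (ne_of_apply_ne _ hst) (Nat.lt_of_le_of_lt hs.2 hb)
    (Nat.lt_of_le_of_lt ht.2 hb)

lemma handlebarFrame_firstColumnHandlebar (hab : a < b) (hb : b < r) :
    (elementaryWall Γ hc hr).HandlebarFrame (firstColumnHandlebar x a b)
      (firstColumn '' Set.Ico (2 * a) (2 * b)) := by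
  let R : GPath (complete (ℕ × ℕ) Γ) :=
    rayPath firstColumn firstColumn_injective (2 * a) (2 * (b - a) - 1)
  have hR : R.verts = firstColumn '' Set.Ico (2 * a) (2 * b) := by
    rw [rayPath_verts]
    congr 1
    ext t
    simp only [Set.mem_Icc, Set.mem_Ico]
    omega
  have hcol : (elementaryWall Γ hc hr).IsColPath R :=
    isColPath_rayPath_firstColumn hc hr (by omega)
  refine ⟨R, R, hcol, hcol, by rw [hR, Set.union_self], ?_⟩
  rintro _ ⟨s, ⟨has, hsb⟩, rfl⟩
  rw [hR]
  exact Or.inl ⟨⟨2 * s, ⟨by omega, by omega⟩, rfl⟩, ⟨2 * s + 1, ⟨by omega, by omega⟩, rfl⟩⟩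

lemma isHandlebar_firstColumnHandlebar (hab : a < b) (hb : b < r) :
    (elementaryWall Γ hc hr).IsHandlebar (firstColumnHandlebar x a b) := by
  refine ⟨?_, ?_, Or.inl (pureSeries_firstColumnHandlebar hc hr x hb), _,
    handlebarFrame_firstColumnHandlebar hc hr x hab hb⟩
  · rintro _ ⟨s, hs, rfl⟩
    exact isHandle_firstColumnHandle hc hr x (Nat.lt_of_le_of_lt hs.2 hb)
  · rintro _ ⟨s, -, rfl⟩ _ ⟨t, -, rfl⟩ hst
    exact disjoint_firstColumnHandle (ne_of_apply_ne _ hst) x x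

lemma isAWHandlebar_lastColumnHandlebar (hb : b < 2 * r) :
    (elementaryWall Γ hc hr).IsAWHandlebar (terminals c) (lastColumnHandlebar c x a b) := by
  refine ⟨?_, ?_, Or.inr ?_⟩
  · rintro _ ⟨s, hs, rfl⟩
    exact isAWHandle_lastColumnHandle hc hr x (Nat.lt_of_le_of_lt hs.2 hb)
  · rintro _ ⟨s, -, rfl⟩ _ ⟨t, -, rfl⟩ hst
    exact disjoint_lastColumnHandle (by omega) (ne_of_apply_ne _ hst) x x
  · rintro _ ⟨s, hs, rfl⟩
    exact lastColumn_mem_colc hc hr (Nat.le_sub_of_add_le (Nat.lt_of_le_of_lt hs.2 hb))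

lemma awFrame_lastColumnHandlebar (hb : b < 2 * r) :
    (elementaryWall Γ hc hr).AWFrame (lastColumnHandlebar c x a b)
      (elementaryWall Γ hc hr).colc.verts := by
  refine ⟨_, Wall.isColPath_colc _, rfl, ?_⟩
  rintro _ ⟨s, hs, rfl⟩
  exact lastColumn_mem_colc hc hr (Nat.le_sub_of_add_le (Nat.lt_of_le_of_lt hs.2 hb))

lemma disjoint_image_firstColumn_colc (S : Set ℕ) :
    Disjoint (firstColumn '' S) (elementaryWall Γ hc hr).colc.verts := by
  rw [elementaryWall_colc_verts]
  refine disjoint_image_firstColumn_of_lt_fst _ ?_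
  rintro _ ⟨t, -, rfl⟩
  exact two_lt_lastColumn_fst (by omega) t

end Handles

lemma exists_injective_mem_image_Ico {α : Type*} {f : ℕ → α} (hf : Function.Injective f)
    (a k : ℕ) :
    ∃ inj : Fin k → α, Function.Injective inj ∧ ∀ t, inj t ∈ f '' Set.Ico a (a + k) :=
  ⟨fun t => f (a + t), fun _ _ h => Fin.ext (Nat.add_left_cancel (hf h)),
    fun t => ⟨a + t, ⟨by omega, by omega⟩, rfl⟩⟩

lemma mul_add_le_mul_or {k i j : ℕ} (hij : i ≠ j) : i * k + k ≤ j * k ∨ j * k + k ≤ i * k := by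
  simp only [← Nat.succ_mul]
  exact hij.lt_or_gt.imp (Nat.mul_le_mul_right k) (Nat.mul_le_mul_right k)

/-! ### Ribboned walls with prescribed lengths -/

lemma three_le_mul_add_two_add_one {k : ℕ} (hk : 0 < k) (m : ℕ) : 3 ≤ k * (m + 2) + 1 := by
  nlinarith

lemma mul_add_lt_mul_add_two_add_one {k m i : ℕ} (hi : i < m) :
    i * k + k < k * (m + 2) + 1 := by
  nlinarith

lemma two_mul_add_two_mul_lt (k m : ℕ) : 2 * k + 2 * k < 2 * (k * (m + 2) + 1) := by
  nlinarith

section SeriesRibbonedWall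

variable {Γ : Type} [AddCommGroup Γ] {k m : ℕ} (hk : 0 < k) (g : Fin m → Γ) (h₁ h₂ : Γ)

/-- A ribboned wall with handlebars in series on the first column of an elementary wall and two
disjoint handlebars on the last column, of prescribed lengths `g i`, `h₁`, `h₂`. -/
def seriesRibbonedWall :
    RibbonedWall (complete (ℕ × ℕ) Γ) (terminals (k * (m + 2) + 1)) k where
  c := k * (m + 2) + 1
  r := k * (m + 2) + 1
  W := elementaryWall Γ (three_le_mul_add_two_add_one hk m) (three_le_mul_add_two_add_one hk m)
  m := m
  P i := firstColumnHandlebar (g i) (i * k) (i * k + k)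
  Q1 := lastColumnHandlebar _ h₁ 0 (0 + 2 * k)
  Q2 := lastColumnHandlebar _ h₂ (2 * k) (2 * k + 2 * k)
  g := g
  h1 := h₁
  h2 := h₂
  wall_order := by rw [min_self]; exact Nat.le_succ _
  hb i := isHandlebar_firstColumnHandlebar _ _ _ (Nat.lt_add_of_pos_right hk)
    (mul_add_lt_mul_add_two_add_one i.2)
  hq1 := isAWHandlebar_lastColumnHandlebar _ _ _
    (Nat.lt_of_le_of_lt (by omega) (two_mul_add_two_mul_lt k m))
  hq2 := isAWHandlebar_lastColumnHandlebar _ _ _ (two_mul_add_two_mul_lt k m)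
  q_eq_or_disj := by
    right
    rintro _ ⟨s, hs, rfl⟩ _ ⟨t, ht, rfl⟩
    rw [Set.mem_Ico] at hs ht
    exact disjoint_lastColumnHandle (Nat.succ_pos _) (by omega) _ _
  fam_disj i j hij := by
    rintro _ ⟨s, hs, rfl⟩ _ ⟨t, ht, rfl⟩
    rw [Set.mem_Ico] at hs ht
    have := mul_add_le_mul_or (k := k) (Fin.val_ne_of_ne hij)
    exact disjoint_firstColumnHandle (by omega) _ _
  fam_disj_q i := by
    have hc := three_le_mul_add_two_add_one hk m
    rintro _ ⟨s, -, rfl⟩ _ (⟨t, -, rfl⟩ | ⟨t, -, rfl⟩) <;>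
      exact disjoint_firstColumnHandle_lastColumnHandle (by omega) _ _ _ _
  nonmix :=
    ⟨fun i => firstColumn '' Set.Ico (2 * (i * k)) (2 * (i * k + k)), _, _,
      fun i => handlebarFrame_firstColumnHandlebar _ _ _ (Nat.lt_add_of_pos_right hk)
        (mul_add_lt_mul_add_two_add_one i.2),
      awFrame_lastColumnHandlebar _ _ _
        (Nat.lt_of_le_of_lt (by omega) (two_mul_add_two_mul_lt k m)),
      awFrame_lastColumnHandlebar _ _ _ (two_mul_add_two_mul_lt k m),
      fun _ _ hij => disjoint_image_firstColumn (mul_add_le_mul_or (Fin.val_ne_of_ne hij)),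
      fun _ => by rw [Set.union_self]; exact disjoint_image_firstColumn_colc _ _ _⟩
  card_P i := exists_injective_mem_image_Ico (firstColumnHandle_injective _) _ _
  card_Q1 := exists_injective_mem_image_Ico (lastColumnHandle_injective _ _) _ _
  card_Q2 := exists_injective_mem_image_Ico (lastColumnHandle_injective _ _) _ _
  balanced := stronglyBalanced_elementaryWall _ _
  lenP i := by rintro _ ⟨s, -, rfl⟩; exact edgePath_some_glen _ _
  lenQ1 := by rintro _ ⟨s, -, rfl⟩; exact edgePath_some_glen _ _
  lenQ2 := by rintro _ ⟨s, -, rfl⟩; exact edgePath_some_glen _ _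

lemma pureSeries_seriesRibbonedWall (i : Fin m) :
    (seriesRibbonedWall hk g h₁ h₂).W.PureSeries ((seriesRibbonedWall hk g h₁ h₂).P i) :=
  pureSeries_firstColumnHandlebar _ _ _ (mul_add_lt_mul_add_two_add_one i.2)

lemma isObstruction_seriesRibbonedWall {Λ : Set Γ} (i₀ : Fin m)
    (hsum : (∑ i, g i) + h₁ + h₂ ∈ Λ)
    (hclosure : ∀ i, ∀ b₁ b₂ : ℕ, b₁ + b₂ = 2 →
      ¬ ∃ z ∈ AddSubgroup.closure (g '' {j | j ≠ i}), z + b₁ • h₁ + b₂ • h₂ ∈ Λ)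
    (hzmultiples : m = 1 → ∀ i,
      (¬ ∃ z ∈ AddSubgroup.zmultiples (g i), z + 2 • h₁ ∈ Λ) ∧
        ¬ ∃ z ∈ AddSubgroup.zmultiples (g i), z + 2 • h₂ ∈ Λ) :
    (seriesRibbonedWall hk g h₁ h₂).IsObstruction Λ :=
  ⟨⟨hsum, hclosure, fun _ _ _ _ _ i hi => (hi (pureSeries_seriesRibbonedWall hk g h₁ h₂ i)).elim⟩,
    ⟨i₀, pureSeries_seriesRibbonedWall hk g h₁ h₂ i₀⟩, hzmultiples⟩

end SeriesRibbonedWall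

/-! ### Obstructions and the Erdős–Pósa condition -/

section ErdosPosa

variable {Γ : Type} [AddCommGroup Γ] {Λ : Set Γ} {k : ℕ}

lemma exists_isObstruction_of_not_EP1 (h : ¬ EP1 Λ) (hk : 0 < k) :
    ∃ (A : Set (ℕ × ℕ)) (R : RibbonedWall (complete (ℕ × ℕ) Γ) A k), R.IsObstruction Λ := by
  simp only [EP1, not_forall, not_or] at h
  obtain ⟨a, b, c, habc, hab, ha, hb⟩ := h
  simp only [add_comm (2 • _)] at ha hb
  refine ⟨_, seriesRibbonedWall hk (fun _ : Fin 1 => c) a b,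
    isObstruction_seriesRibbonedWall hk _ _ _ 0 ?_ ?_ fun _ _ => ⟨ha, hb⟩⟩
  · rwa [Fin.sum_univ_one, add_assoc, add_comm]
  · rintro i b₁ b₂ hb₁₂ ⟨z, hz, hzΛ⟩
    have hempty : {j : Fin 1 | j ≠ i} = ∅ := Set.eq_empty_of_forall_notMem fun j hj =>
      hj (Subsingleton.elim j i)
    rw [hempty, Set.image_empty, AddSubgroup.closure_empty, AddSubgroup.mem_bot] at hz
    subst hz
    obtain ⟨rfl, rfl⟩ | ⟨rfl, rfl⟩ | ⟨rfl, rfl⟩ :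
      b₁ = 0 ∧ b₂ = 2 ∨ b₁ = 1 ∧ b₂ = 1 ∨ b₁ = 2 ∧ b₂ = 0 := by omega
    · exact hb ⟨0, zero_mem _, by simpa using hzΛ⟩
    · exact hab (by simpa using hzΛ)
    · exact ha ⟨0, zero_mem _, by simpa using hzΛ⟩

lemma exists_isObstruction_of_not_EP2 (h : ¬ EP2 Λ) (hk : 0 < k) :
    ∃ (A : Set (ℕ × ℕ)) (R : RibbonedWall (complete (ℕ × ℕ) Γ) A k), R.IsObstruction Λ := by
  simp only [EP2, not_forall, not_or] at h
  obtain ⟨a, b, c, habc, hb, hc⟩ := h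
  refine ⟨_, seriesRibbonedWall hk ![b, c] a a,
    isObstruction_seriesRibbonedWall hk _ _ _ 0 ?_ ?_ fun h => absurd h (by decide)⟩
  · have : b + c + a + a = 2 • a + b + c := by abel
    simpa [this] using habc
  · rintro i b₁ b₂ hb₁₂ ⟨z, hz, hzΛ⟩
    rw [add_assoc, ← add_nsmul, hb₁₂, add_comm] at hzΛ
    fin_cases i
    · have himage : ![b, c] '' {j | j ≠ 0} = {c} := by
        ext; simp [Fin.exists_fin_two, eq_comm]
      refine hc ⟨z, ?_, hzΛ⟩
      rwa [AddSubgroup.zmultiples_eq_closure, ← himage]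
    · have himage : ![b, c] '' {j | j ≠ 1} = {b} := by
        ext; simp [Fin.exists_fin_two, eq_comm]
      refine hb ⟨z, ?_, hzΛ⟩
      rwa [AddSubgroup.zmultiples_eq_closure, ← himage]

lemma exists_isObstruction_of_not_EPCondition (h : ¬ EPCondition Λ) (hk : 0 < k) :
    ∃ (A : Set (ℕ × ℕ)) (R : RibbonedWall (complete (ℕ × ℕ) Γ) A k), R.IsObstruction Λ :=
  (not_and_or.1 h).elim (exists_isObstruction_of_not_EP1 · hk)
    (exists_isObstruction_of_not_EP2 · hk)

lemma EP2.exists_mem_closure_image_ne {ι : Type*} [Fintype ι] [Nontrivial ι] (h : EP2 Λ)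
    {g : ι → Γ} {a : Γ} {n : ℤ} (hmem : 2 • a + n • ∑ i, g i ∈ Λ) :
    ∃ i, ∃ z ∈ AddSubgroup.closure (g '' {j | j ≠ i}), 2 • a + z ∈ Λ := by
  classical
  obtain ⟨i, j, hij⟩ := exists_pair_ne ι
  have mem_closure {l t : ι} (hlt : l ≠ t) : g l ∈ AddSubgroup.closure (g '' {j | j ≠ t}) :=
    AddSubgroup.subset_closure ⟨l, hlt, rfl⟩
  have hsum : ∑ l ∈ Finset.univ.erase i, g l ∈ AddSubgroup.closure (g '' {j | j ≠ i}) :=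
    AddSubgroup.sum_mem _ fun l hl => mem_closure (Finset.ne_of_mem_erase hl)
  rw [← Finset.add_sum_erase _ _ (Finset.mem_univ i), smul_add, ← add_assoc] at hmem
  rcases h _ _ _ hmem with ⟨z, hz, hzΛ⟩ | ⟨z, hz, hzΛ⟩
  · have hle := AddSubgroup.zmultiples_le_of_mem (AddSubgroup.zsmul_mem _ (mem_closure hij) n)
    exact ⟨j, z, hle hz, hzΛ⟩
  · have hle := AddSubgroup.zmultiples_le_of_mem (AddSubgroup.zsmul_mem _ hsum n)
    exact ⟨i, z, hle hz, hzΛ⟩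

namespace RibbonedWall

variable {V : Type} {G : LabGraph V Γ} {A : Set V} {R : RibbonedWall G A k}

lemma Irreducible.h1_add_h2_notMem (hR : R.Irreducible Λ) (i : Fin R.m) : R.h1 + R.h2 ∉ Λ :=
  fun h => hR.2.1 i 1 1 rfl ⟨0, zero_mem _, by simpa using h⟩

lemma Irreducible.two_nsmul_add_notMem (hR : R.Irreducible Λ) {x : Γ}
    (hx : x = R.h1 ∨ x = R.h2) (i : Fin R.m) {z : Γ}
    (hz : z ∈ AddSubgroup.closure (R.g '' {j | j ≠ i})) : 2 • x + z ∉ Λ := by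
  intro h
  rw [add_comm] at h
  rcases hx with rfl | rfl
  · exact hR.2.1 i 2 0 rfl ⟨z, hz, by simpa using h⟩
  · exact hR.2.1 i 0 2 rfl ⟨z, hz, by simpa using h⟩

lemma IsObstruction.two_nsmul_add_zsmul_sum_notMem (hR : R.IsObstruction Λ) (hEP2 : EP2 Λ)
    {x : Γ} (hx : x = R.h1 ∨ x = R.h2) (n : ℤ) : 2 • x + n • ∑ i, R.g i ∉ Λ := by
  intro h
  obtain ⟨hirr, ⟨i, -⟩, hA7⟩ := hR
  rcases subsingleton_or_nontrivial (Fin R.m) with hsub | hnontriv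
  · have hm : R.m = 1 := le_antisymm (Fin.subsingleton_iff_le_one.1 hsub) i.pos
    rw [Fintype.sum_subsingleton _ i, add_comm] at h
    have hz : n • R.g i ∈ AddSubgroup.zmultiples (R.g i) :=
      AddSubgroup.zsmul_mem_zmultiples _ n
    rcases hx with rfl | rfl
    exacts [(hA7 hm i).1 ⟨_, hz, h⟩, (hA7 hm i).2 ⟨_, hz, h⟩]
  · obtain ⟨l, z, hz, hzΛ⟩ := hEP2.exists_mem_closure_image_ne h
    exact hirr.two_nsmul_add_notMem hx l hz hzΛ

theorem IsObstruction.not_EPCondition (hR : R.IsObstruction Λ) : ¬ EPCondition Λ := by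
  rintro ⟨hEP1, hEP2⟩
  obtain ⟨i, -⟩ := hR.2.1
  have hA3 : R.h1 + R.h2 + ∑ i, R.g i ∈ Λ := by
    rw [add_comm, ← add_assoc]
    exact hR.1.1
  rcases hEP1 _ _ _ hA3 with h | ⟨_, ⟨n, rfl⟩, h⟩ | ⟨_, ⟨n, rfl⟩, h⟩
  · exact hR.1.h1_add_h2_notMem i h
  · exact hR.two_nsmul_add_zsmul_sum_notMem hEP2 (Or.inl rfl) n h
  · exact hR.two_nsmul_add_zsmul_sum_notMem hEP2 (Or.inr rfl) n h

end RibbonedWall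

end ErdosPosa

theorem obstruction_exists_iff_not_EPCondition_general
    (Γ : Type) [AddCommGroup Γ] (Λ : Set Γ) :
    ((∃ (V : Type) (G : LabGraph V Γ) (A : Set V) (k : ℕ), 0 < k ∧
      ∃ R : RibbonedWall G A k, R.IsObstruction Λ) ↔ ¬ EPCondition Λ) ∧
    (¬ EPCondition Λ → ∀ k : ℕ, 0 < k →
      ∃ (V : Type) (G : LabGraph V Γ) (A : Set V) (R : RibbonedWall G A k),
        R.IsObstruction Λ) := by
  refine ⟨⟨?_, fun h => ?_⟩, fun h k hk => ?_⟩
  · rintro ⟨V, G, A, k, -, R, hR⟩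
    exact hR.not_EPCondition
  · exact ⟨_, _, (exists_isObstruction_of_not_EPCondition h one_pos).imp fun _ hR =>
      ⟨1, one_pos, hR⟩⟩
  · exact ⟨_, _, exists_isObstruction_of_not_EPCondition h hk⟩

/-- A `Λ`-obstruction exists if and only if `Λ` does not satisfy the
Erdős–Pósa condition; moreover, if `Λ` fails the Erdős–Pósa condition, then for every
positive integer `k` there is a `Λ`-obstruction that is an `(A, k)`-ribboned wall. -/
theorem obstruction_exists_iff_not_EPCondition
    (Γ : Type) [AddCommGroup Γ] [Fintype Γ] (Λ : Set Γ) :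
    ((∃ (V : Type) (G : LabGraph V Γ) (A : Set V) (k : ℕ), 0 < k ∧
      ∃ R : RibbonedWall G A k, R.IsObstruction Λ) ↔ ¬ EPCondition Λ) ∧
    (¬ EPCondition Λ → ∀ k : ℕ, 0 < k →
      ∃ (V : Type) (G : LabGraph V Γ) (A : Set V) (R : RibbonedWall G A k),
        R.IsObstruction Λ) :=
  obstruction_exists_iff_not_EPCondition_general Γ Λ
end

section
/- Let Γ be a finite abelian group, let Λ ⊆ Γ, and let A and B be vertex sets. If ∅ ≠ Λ ⊊ Γ, then the family of Λ-allowable A-B-paths does not satisfy the Erdős–Pósa property; if Λ = Γ, then it does satisfy the Erdős–Pósa property. -/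
/-- An `A`-`B`-path: a path with at least one edge, one endpoint in `A`, the other
endpoint in `B`, and internally disjoint from `A ∪ B`. -/
def IsABPath {V Γ : Type} {G : LabGraph V Γ} (A B : Set V) (P : GPath G) : Prop :=
  0 < P.n ∧ ((P.first ∈ A ∧ P.last ∈ B) ∨ (P.first ∈ B ∧ P.last ∈ A)) ∧
    ∀ x, P.Internal x → x ∉ A ∪ B

/-- A weak `A`-`B`-path: a path with at least one edge, one endpoint in `A` and the
other endpoint in `B`; internal vertices may lie in `A ∪ B`. -/
def IsWeakABPath {V Γ : Type} {G : LabGraph V Γ} (A B : Set V) (P : GPath G) : Prop :=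
  0 < P.n ∧ ((P.first ∈ A ∧ P.last ∈ B) ∨ (P.first ∈ B ∧ P.last ∈ A))

/-!
If `Λ = Γ`, the labels are irrelevant: an `A`-`B`-path is a path of the underlying simple graph
between distinct vertices of `A` and `B`. Such a path leads from `A \ B` to `B`, from `B \ A` to
`A`, or joins two vertices of `A ∩ B`. Menger's theorem handles the first two kinds and an
approximate form of Gallai's theorem on `C`-paths the third: if a maximum packing consists of `k`
`C`-paths, then Menger's theorem bounds the number of vertices separating the remaining vertices of
`C` from the packing, since `k + 1` disjoint legs would allow one path of the packing to be
rerouted into two.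

If `∅ ≠ Λ ≠ Γ`, choose `μ ∉ Λ` and `l ∈ Λ`. In a planar grid hanging below a horizontal line, let
`A` be the leftmost column and `B` the rightmost one. Every `A`-`B`-path collects the label `μ`
once and the label `l - μ` at each visit to the line, so an allowable path must visit the line. By
planarity, two disjoint such paths would each have to start above the other. On the other hand, the
paths that rise straight to the line and then descend again are allowable, and few vertices cannot
hit them all.
-/

section Connection

variable {V : Type*} {G H : SimpleGraph V} {A A' B B' D W W' : Set V} {a b c : V}

/-- Reachability of `b` from `a` along a walk of `G` all of whose vertices lie in `W`. Allowing `W`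
to vary replaces the deletion of vertices. -/
def ReachableIn (G : SimpleGraph V) (W : Set V) (a b : V) : Prop :=
  ∃ p : G.Walk a b, ∀ v ∈ p.support, v ∈ W

/-- The vertices reachable from `A` within `W`. -/
def reachSet (G : SimpleGraph V) (W A : Set V) : Set V :=
  {v | ∃ a ∈ A, ReachableIn G W a v}

/-- `W` contains a walk of `G` from `A` to `B`, possibly a trivial one at a vertex of `A ∩ B`. -/
def Joins (G : SimpleGraph V) (A B W : Set V) : Prop :=
  ∃ a ∈ A, ∃ b ∈ B, ReachableIn G W a b

/-- `W` contains a walk of `G` from a vertex of `A` to a different vertex of `B`. -/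
def JoinsDistinct (G : SimpleGraph V) (A B W : Set V) : Prop :=
  ∃ a ∈ A, ∃ b ∈ B, a ≠ b ∧ ReachableIn G W a b

namespace ReachableIn

theorem refl (ha : a ∈ W) : ReachableIn G W a a := ⟨.nil, by simpa using ha⟩

theorem symm : ReachableIn G W a b → ReachableIn G W b a :=
  fun ⟨p, hp⟩ => ⟨p.reverse, by simpa using hp⟩

theorem trans : ReachableIn G W a b → ReachableIn G W b c → ReachableIn G W a c :=
  fun ⟨p, hp⟩ ⟨q, hq⟩ => ⟨p.append q, fun v hv =>
    ((SimpleGraph.Walk.mem_support_append_iff p q).1 hv).elim (hp v) (hq v)⟩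

theorem of_adj (h : G.Adj a b) (ha : a ∈ W) (hb : b ∈ W) : ReachableIn G W a b :=
  ⟨h.toWalk, by simp [ha, hb]⟩

theorem mono (hGH : G ≤ H) (hW : W ⊆ W') : ReachableIn G W a b → ReachableIn H W' a b :=
  fun ⟨p, hp⟩ => ⟨p.mapLe hGH, fun v hv => hW (hp v (by simpa using hv))⟩

theorem left_mem : ReachableIn G W a b → a ∈ W := fun ⟨p, hp⟩ => hp a p.start_mem_support

theorem right_mem : ReachableIn G W a b → b ∈ W := fun ⟨p, hp⟩ => hp b p.end_mem_support

theorem mem_of_closed (h : ReachableIn G W a b) (ha : a ∈ D)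
    (hD : ∀ u ∈ D, ∀ v ∈ W, G.Adj u v → v ∈ D) : b ∈ D := by
  obtain ⟨p, hp⟩ := h
  induction p with
  | nil => exact ha
  | cons hadj p ih =>
    simp only [SimpleGraph.Walk.support_cons, List.mem_cons, forall_eq_or_imp] at hp
    exact ih (hD _ ha _ (hp.2 _ p.start_mem_support) hadj) hp.2

end ReachableIn

theorem subset_reachSet : A ∩ W ⊆ reachSet G W A := fun a ha => ⟨a, ha.1, .refl ha.2⟩

theorem reachSet_subset : reachSet G W A ⊆ W := fun _ ⟨_, _, h⟩ => h.right_mem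

theorem reachSet_subset_of_closed (hA : A ∩ W ⊆ D)
    (hD : ∀ u ∈ D, ∀ v ∈ W, G.Adj u v → v ∈ D) : reachSet G W A ⊆ D :=
  fun _ ⟨_, ha, h⟩ => h.mem_of_closed (hA ⟨ha, h.left_mem⟩) hD

theorem mem_reachSet_of_adj (ha : a ∈ reachSet G W A) (hb : b ∈ W) (h : G.Adj a b) :
    b ∈ reachSet G W A :=
  let ⟨c, hc, hca⟩ := ha
  ⟨c, hc, hca.trans (.of_adj h hca.right_mem hb)⟩

theorem disjoint_reachSet_iff :
    Disjoint (reachSet G W A) (reachSet G W B) ↔ ¬ Joins G A B W := by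
  rw [Set.disjoint_left]
  constructor
  · rintro h ⟨a, ha, b, hb, hab⟩
    exact h ⟨a, ha, hab⟩ ⟨b, hb, .refl hab.right_mem⟩
  · rintro h v ⟨a, ha, hav⟩ ⟨b, hb, hbv⟩
    exact h ⟨a, ha, b, hb, hav.trans hbv.symm⟩

namespace Joins

theorem symm : Joins G A B W → Joins G B A W :=
  fun ⟨a, ha, b, hb, h⟩ => ⟨b, hb, a, ha, h.symm⟩

theorem mono (hGH : G ≤ H) (hA : A ⊆ A') (hB : B ⊆ B') (hW : W ⊆ W') :
    Joins G A B W → Joins H A' B' W' :=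
  fun ⟨a, ha, b, hb, h⟩ => ⟨a, hA ha, b, hB hb, h.mono hGH hW⟩

theorem exists_mem_reachSet : Joins G A B W → ∃ b ∈ B, b ∈ reachSet G W A :=
  fun ⟨a, ha, b, hb, h⟩ => ⟨b, hb, a, ha, h⟩

end Joins

namespace JoinsDistinct

theorem symm : JoinsDistinct G A B W → JoinsDistinct G B A W :=
  fun ⟨a, ha, b, hb, hne, h⟩ => ⟨b, hb, a, ha, hne.symm, h.symm⟩

theorem mono (hA : A ⊆ A') (hB : B ⊆ B') (hW : W ⊆ W') :
    JoinsDistinct G A B W → JoinsDistinct G A' B' W' :=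
  fun ⟨a, ha, b, hb, hne, h⟩ => ⟨a, hA ha, b, hB hb, hne, h.mono le_rfl hW⟩

end JoinsDistinct

end Connection

section Packing

variable {V ι : Type*} {F F' : Set V → Prop} {k : ℕ}

/-- There are `k` pairwise disjoint vertex sets with the property `F`. -/
def Packs (F : Set V → Prop) (k : ℕ) : Prop :=
  ∃ W : Fin k → Set V, (∀ i, F (W i)) ∧ Pairwise (Function.onFun Disjoint W)

theorem Packs.mono (h : ∀ W, F W → F' W) : Packs F k → Packs F' k :=
  fun ⟨W, hW, hdisj⟩ => ⟨W, fun i => h _ (hW i), hdisj⟩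

theorem packs_of_pairwiseDisjoint {X : Finset ι} {W : ι → Set V} (hF : ∀ z ∈ X, F (W z))
    (hW : (X : Set ι).PairwiseDisjoint W) : Packs F X.card :=
  ⟨fun i => W (X.equivFin.symm i), fun i => hF _ (X.equivFin.symm i).2, fun i j hij =>
    hW (X.equivFin.symm i).2 (X.equivFin.symm j).2
      fun h => hij (X.equivFin.symm.injective (Subtype.ext h))⟩

end Packing

section Menger

open scoped Finset

variable {V : Type*} {G H : SimpleGraph V} {A B W X : Set V} {k : ℕ}

theorem joins_bot_iff : Joins (⊥ : SimpleGraph V) A B W ↔ (A ∩ B ∩ W).Nonempty := by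
  constructor
  · rintro ⟨a, ha, b, hb, p, hp⟩
    cases p with
    | nil => exact ⟨a, ⟨ha, hb⟩, by simpa using hp⟩
    | cons h => exact h.elim
  · rintro ⟨a, ⟨ha, hb⟩, haW⟩
    exact ⟨a, ha, a, hb, .refl haW⟩

theorem menger_bot (A B : Set V) (k : ℕ) :
    Packs (Joins ⊥ A B) k ∨ ∃ X : Finset V, #X < k ∧ ¬ Joins ⊥ A B (X : Set V)ᶜ := by
  by_cases h : ∃ X : Finset V, #X = k ∧ (X : Set V) ⊆ A ∩ B
  · obtain ⟨X, rfl, hX⟩ := h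
    exact .inl (packs_of_pairwiseDisjoint (W := fun v => {v}) (fun v hv =>
      joins_bot_iff.2 ⟨v, hX hv, rfl⟩)
      fun u _ v _ huv => Set.disjoint_singleton.2 huv)
  · have hfin : (A ∩ B).Finite := by
      by_contra hinf
      obtain ⟨X, hX, hcard⟩ := Set.Infinite.exists_subset_card_eq hinf k
      exact h ⟨X, hcard, hX⟩
    refine .inr ⟨hfin.toFinset, ?_, by simp [joins_bot_iff]⟩
    by_contra! hle
    obtain ⟨X, hX, hcard⟩ := Finset.exists_subset_card_eq hle
    exact h ⟨X, hcard, fun v hv => hfin.mem_toFinset.1 (hX hv)⟩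

-- A walk from `A` to `B` stays in the set reached from `A` until it first meets `X`.
theorem Joins.inter_reachSet_union {S : Set V} (hSX : S ⊆ X)
    (hGH : ∀ u ∈ reachSet H Sᶜ A, u ∉ X → ∀ v, G.Adj u v → H.Adj u v)
    (hB : B ∩ reachSet H Sᶜ A ⊆ X) (h : Joins G A B W) :
    Joins H A X (W ∩ (reachSet H Sᶜ A ∪ S)) := by
  by_contra hX
  set D := reachSet H Sᶜ A
  set D' := reachSet H (W ∩ (D ∪ S)) A
  have hD'X : ∀ v ∈ D', v ∉ X := fun v ⟨a, ha, hav⟩ hv => hX ⟨a, ha, v, hv, hav⟩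
  have hD' : ∀ v ∈ D', v ∈ D := fun v hv =>
    (reachSet_subset hv).2.resolve_right fun hS => hD'X v hv (hSX hS)
  have hclosed : reachSet G W A ⊆ D' := by
    refine reachSet_subset_of_closed (fun a ha => subset_reachSet ⟨ha.1, ha.2, ?_⟩) ?_
    · by_cases haS : a ∈ S
      exacts [.inr haS, .inl (subset_reachSet ⟨ha.1, haS⟩)]
    · intro u hu v hv huv
      have huv' := hGH u (hD' u hu) (hD'X u hu) v huv
      refine mem_reachSet_of_adj hu ⟨hv, ?_⟩ huv'
      by_cases hvS : v ∈ S
      exacts [.inr hvS, .inl (mem_reachSet_of_adj (hD' u hu) hvS huv')]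
  obtain ⟨b, hb, hbD⟩ := h.exists_mem_reachSet
  exact hD'X b (hclosed hbD) (hB ⟨hb, hD' b (hclosed hbD)⟩)

/-- A linkage from `A` onto `X`: pairwise disjoint sets `U z`, one for each `z ∈ X`, such that `U z`
joins `A` to `z`. -/
structure IsLinkage (G : SimpleGraph V) (A X : Set V) (U : V → Set V) : Prop where
  joins : ∀ z ∈ X, Joins G A {z} (U z)
  disjoint : X.PairwiseDisjoint U

theorem Joins.mem_of_singleton {z : V} (h : Joins G A {z} W) : z ∈ W := by
  obtain ⟨_, -, _, rfl, h⟩ := h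
  exact h.right_mem

theorem IsLinkage.eq_of_mem {U : V → Set V} (hU : IsLinkage G A X U) {v z : V} (hv : v ∈ X)
    (hz : z ∈ X) (hvz : v ∈ U z) : z = v :=
  hU.disjoint.elim_set hz hv v hvz (hU.joins v hv).mem_of_singleton

theorem exists_isLinkage_of_packs {C : Set V} {X : Finset V} (hX : #X ≤ k)
    (h : Packs (fun W => Joins G A X (W ∩ C)) k) :
    #X = k ∧ ∃ U : V → Set V, IsLinkage G A X U ∧ ∀ z, U z ⊆ C := by
  obtain ⟨W, hW, hdisj⟩ := h
  choose a ha z hz haz using hW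
  have hinj : Function.Injective z := fun i j hij => by
    by_contra hne
    exact Set.disjoint_left.1 (hdisj hne) (haz i).right_mem.1 (hij ▸ (haz j).right_mem.1)
  have himage : Finset.univ.map ⟨z, hinj⟩ = X :=
    Finset.eq_of_subset_of_card_le (fun v hv => by
      obtain ⟨i, -, rfl⟩ := Finset.mem_map.1 hv
      exact hz i) (by simpa using hX)
  refine ⟨by simp [← himage], fun v => {u | ∃ i, z i = v ∧ u ∈ W i ∩ C}, ⟨fun v hv => ?_, ?_⟩,
    fun v u ⟨_, _, hu⟩ => hu.2⟩
  · obtain ⟨i, rfl⟩ : ∃ i, z i = v := by simpa [← himage] using hv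
    exact ⟨a i, ha i, z i, rfl, (haz i).mono le_rfl fun u hu => ⟨i, rfl, hu⟩⟩
  · refine fun v _ v' _ hne => Set.disjoint_left.2 ?_
    rintro u ⟨i, rfl, hi⟩ ⟨j, rfl, hj⟩
    exact Set.disjoint_left.1 (hdisj fun hij => hne (congrArg z hij)) hi.1 hj.1

theorem exists_isLinkage_onto_insert [DecidableEq V] {x y : V} {S : Finset V}
    (menger : ∀ A B, Packs (Joins H A B) k ∨ ∃ X : Finset V, #X < k ∧ ¬ Joins H A B (X : Set V)ᶜ)
    (hG : ∀ u v, G.Adj u v → H.Adj u v ∨ s(u, v) = s(x, y))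
    (hsep : ∀ X : Finset V, #X < k → Joins G A B (X : Set V)ᶜ) (hS : #S < k)
    (hHS : ¬ Joins H A B (S : Set V)ᶜ) (hy : y ∈ reachSet H (S : Set V)ᶜ B) :
    #(insert x S) = k ∧ ∃ U : V → Set V, IsLinkage H A ↑(insert x S) U ∧
      ∀ z, U z ⊆ reachSet H (S : Set V)ᶜ A ∪ S := by
  have hSX : (S : Set V) ⊆ ↑(insert x S) := by simp
  have hdisj := Set.disjoint_left.1 (disjoint_reachSet_iff.2 hHS)
  have hjoin : ∀ W, Joins G A B W → Joins H A ↑(insert x S) W := fun W hW => by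
    refine (hW.inter_reachSet_union (H := H) hSX ?_ ?_).mono le_rfl le_rfl le_rfl
      Set.inter_subset_left
    · intro u hu hux v huv
      obtain h | h := hG u v huv
      · exact h
      · obtain ⟨rfl, -⟩ | ⟨rfl, -⟩ := Sym2.eq_iff.1 h
        exacts [absurd (by simp) hux, absurd hy (hdisj hu)]
    · rintro b ⟨hbB, hbA⟩
      exact absurd (subset_reachSet ⟨hbB, reachSet_subset hbA⟩) (hdisj hbA)
  refine exists_isLinkage_of_packs ((Finset.card_insert_le x S).trans hS) ?_
  obtain hpacks | ⟨X, hX, hHX⟩ := menger A ↑(insert x S)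
  · exact hpacks.mono fun W hW =>
      hW.inter_reachSet_union hSX (fun _ _ _ _ h => h) Set.inter_subset_left
  · exact absurd (hjoin _ (hsep X hX)) hHX

theorem IsLinkage.packs_joins {X Y : Finset V} {f : V → V} {U T : V → Set V}
    (hU : IsLinkage G A X U) (hT : IsLinkage G B Y T) (hfY : Set.MapsTo f X Y)
    (hfinj : Set.InjOn f X) (hf : ∀ z ∈ X, f z = z ∨ G.Adj z (f z))
    (hUT : ∀ z ∈ X, ∀ w ∈ X, z ≠ w → Disjoint (U z) (T (f w))) :
    Packs (Joins G A B) #X := by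
  refine packs_of_pairwiseDisjoint (W := fun z => U z ∪ T (f z)) (fun z hz => ?_) ?_
  · have hzU := (hU.joins z hz).mem_of_singleton
    have hzT := (hT.joins _ (hfY hz)).mem_of_singleton
    obtain ⟨a, ha, _, rfl, haz⟩ := hU.joins z hz
    obtain ⟨b, hb, _, rfl, hbz⟩ := hT.joins _ (hfY hz)
    refine ⟨a, ha, b, hb, (haz.mono le_rfl Set.subset_union_left).trans
      (.trans ?_ (hbz.symm.mono le_rfl Set.subset_union_right))⟩
    obtain h | h := hf _ hz
    · exact h.symm ▸ .refl (.inl hzU)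
    · exact .of_adj h (.inl hzU) (.inr hzT)
  · intro z hz w hw hne
    exact Set.disjoint_union_left.2
      ⟨Set.disjoint_union_right.2 ⟨hU.disjoint hz hw hne, hUT z hz w hw hne⟩,
        Set.disjoint_union_right.2 ⟨(hUT w hw z hz hne.symm).symm,
          hT.disjoint (hfY hz) (hfY hw) (hfinj.ne hz hw hne)⟩⟩

theorem IsLinkage.mono {U : V → Set V} (hHG : H ≤ G) (hU : IsLinkage H A X U) :
    IsLinkage G A X U :=
  ⟨fun z hz => (hU.joins z hz).mono hHG le_rfl le_rfl le_rfl, hU.disjoint⟩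

theorem IsLinkage.packs_joins_of_adj [DecidableEq V] {x y : V} {S : Finset V} {D E : Set V}
    {U T : V → Set V} (hxy : G.Adj x y) (hDE : Disjoint D E) (hxS : x ∉ S) (hyS : y ∉ S)
    (hU : IsLinkage G A ↑(insert x S) U) (hUD : ∀ z, U z ⊆ D ∪ S)
    (hT : IsLinkage G B ↑(insert y S) T) (hTE : ∀ z, T z ⊆ E ∪ S) :
    Packs (Joins G A B) #(insert x S) := by
  let f : V → V := fun z => if z = x then y else z
  have hfY : Set.MapsTo f ↑(insert x S) ↑(insert y S) := by intro z hz; grind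
  have hfinj : Set.InjOn f ↑(insert x S) := by intro z hz w hw; grind
  refine hU.packs_joins hT hfY hfinj (fun z _ => ?_) fun z hz w hw hne => ?_
  · by_cases hzx : z = x
    · subst hzx
      exact .inr (by simpa [f] using hxy)
    · exact .inl (if_neg hzx)
  · refine Set.disjoint_left.2 fun v hvz hvw => ?_
    have hvS : v ∈ S := by
      rcases hUD z hvz, hTE _ hvw with ⟨hD | hS, hE | hS⟩
      exacts [absurd hE (Set.disjoint_left.1 hDE hD), hS, hS, hS]
    have hz := hU.eq_of_mem (by simp [hvS]) hz hvz
    have hw := hT.eq_of_mem (by simp [hvS]) (hfY hw) hvw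
    grind

theorem Joins.mem_reachSet_of_deleteEdge {x y : V}
    (hG : ∀ u v, G.Adj u v → H.Adj u v ∨ s(u, v) = s(x, y))
    (hAB : Joins G A B W) (hHW : ¬ Joins H A B W) :
    x ∈ reachSet H W A ∧ y ∈ reachSet H W B ∨ y ∈ reachSet H W A ∧ x ∈ reachSet H W B := by
  have touches {A B : Set V} (hAB : Joins G A B W) (hHW : ¬ Joins H A B W) :
      x ∈ reachSet H W A ∨ y ∈ reachSet H W A := by
    by_contra! hxy
    have hclosed : reachSet G W A ⊆ reachSet H W A :=
      reachSet_subset_of_closed subset_reachSet fun u hu v hv huv => by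
        obtain h | h := hG u v huv
        · exact mem_reachSet_of_adj hu hv h
        · obtain ⟨rfl, -⟩ | ⟨rfl, -⟩ := Sym2.eq_iff.1 h
          exacts [absurd hu hxy.1, absurd hu hxy.2]
    obtain ⟨b, hb, hbG⟩ := hAB.exists_mem_reachSet
    obtain ⟨a, ha, hab⟩ := hclosed hbG
    exact hHW ⟨a, ha, b, hb, hab⟩
  have hdisj := Set.disjoint_left.1 (disjoint_reachSet_iff.2 hHW)
  obtain hx | hy := touches hAB hHW <;>
    obtain hx' | hy' := touches hAB.symm fun h => hHW h.symm
  exacts [absurd hx' (hdisj hx), .inl ⟨hx, hy'⟩, .inr ⟨hy, hx'⟩, absurd hy' (hdisj hy)]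

theorem packs_joins_of_deleteEdge {x y : V} {S : Finset V} (hHG : H ≤ G) (hxy : G.Adj x y)
    (menger : ∀ A B, Packs (Joins H A B) k ∨ ∃ X : Finset V, #X < k ∧ ¬ Joins H A B (X : Set V)ᶜ)
    (hG : ∀ u v, G.Adj u v → H.Adj u v ∨ s(u, v) = s(x, y))
    (hsep : ∀ X : Finset V, #X < k → Joins G A B (X : Set V)ᶜ) (hS : #S < k)
    (hHS : ¬ Joins H A B (S : Set V)ᶜ) (hx : x ∈ reachSet H (S : Set V)ᶜ A)
    (hy : y ∈ reachSet H (S : Set V)ᶜ B) : Packs (Joins G A B) k := by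
  classical
  obtain ⟨hcard, U, hU, hUA⟩ := exists_isLinkage_onto_insert menger hG hsep hS hHS hy
  obtain ⟨-, T, hT, hTB⟩ := exists_isLinkage_onto_insert menger
    (fun u v h => Sym2.eq_swap (a := x) ▸ hG u v h) (fun X hX => (hsep X hX).symm) hS
    (fun h => hHS h.symm) hx
  exact hcard ▸ (hU.mono hHG).packs_joins_of_adj hxy (disjoint_reachSet_iff.2 hHS)
    (reachSet_subset hx) (reachSet_subset hy) hUA (hT.mono hHG) hTB

theorem menger_of_deleteEdge {x y : V} (hHG : H ≤ G) (hxy : G.Adj x y)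
    (menger : ∀ A B, Packs (Joins H A B) k ∨ ∃ X : Finset V, #X < k ∧ ¬ Joins H A B (X : Set V)ᶜ)
    (hG : ∀ u v, G.Adj u v → H.Adj u v ∨ s(u, v) = s(x, y)) (A B : Set V) :
    Packs (Joins G A B) k ∨ ∃ X : Finset V, #X < k ∧ ¬ Joins G A B (X : Set V)ᶜ := by
  obtain hpacks | ⟨S, hS, hHS⟩ := menger A B
  · exact .inl (hpacks.mono fun W hW => hW.mono hHG le_rfl le_rfl le_rfl)
  refine or_iff_not_imp_right.2 fun hsep => ?_
  push Not at hsep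
  obtain ⟨hx, hy⟩ | ⟨hy, hx⟩ := (hsep S hS).mem_reachSet_of_deleteEdge hG hHS
  · exact packs_joins_of_deleteEdge hHG hxy menger hG hsep hS hHS hx hy
  · exact packs_joins_of_deleteEdge hHG hxy.symm menger
      (fun u v h => Sym2.eq_swap (a := x) ▸ hG u v h) hsep hS hHS hy hx

theorem menger_fromEdgeSet (s : Finset (Sym2 V)) (k : ℕ) (A B : Set V) :
    Packs (Joins (.fromEdgeSet s) A B) k ∨
      ∃ X : Finset V, #X < k ∧ ¬ Joins (.fromEdgeSet s) A B (X : Set V)ᶜ := by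
  classical
  induction s using Finset.induction_on generalizing A B with
  | empty => simpa using menger_bot A B k
  | insert e s _ ih =>
    induction e with | _ x y
    by_cases hxy : x = y
    · have hdel : SimpleGraph.fromEdgeSet (insert s(x, y) s : Set (Sym2 V)) = .fromEdgeSet s := by
        ext u v
        simp only [SimpleGraph.fromEdgeSet_adj, Set.mem_insert_iff, Sym2.eq_iff]
        grind
      simpa only [Finset.coe_insert, hdel] using ih A B
    · refine menger_of_deleteEdge (x := x) (y := y) (SimpleGraph.fromEdgeSet_mono (by simp))
        (by simp [hxy]) ih (fun u v h => ?_) A B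
      simp only [Finset.coe_insert, SimpleGraph.fromEdgeSet_adj, Set.mem_insert_iff] at h ⊢
      tauto

theorem exists_finset_mem_iff_eventually_mem {ι : Type*} (U : Ultrafilter ι) {X : ι → Finset V}
    (hX : ∀ i, #(X i) < k) : ∃ Y : Finset V, #Y < k ∧ ∀ v, v ∈ Y ↔ ∀ᶠ i in U, v ∈ X i := by
  have hcard (Y : Finset V) (hY : ∀ v ∈ Y, ∀ᶠ i in U, v ∈ X i) : #Y < k := by
    obtain ⟨i, hi⟩ := ((Filter.eventually_all_finset Y).2 hY).exists
    exact (Finset.card_le_card hi).trans_lt (hX i)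
  have hfin : {v | ∀ᶠ i in U, v ∈ X i}.Finite := by
    by_contra hinf
    obtain ⟨Y, hY, hYcard⟩ := Set.Infinite.exists_subset_card_eq hinf k
    exact (hcard Y hY).ne hYcard
  exact ⟨hfin.toFinset, hcard _ fun v hv => hfin.mem_toFinset.1 hv, fun v => hfin.mem_toFinset⟩

theorem menger (G : SimpleGraph V) (A B : Set V) (k : ℕ) :
    Packs (Joins G A B) k ∨ ∃ X : Finset V, #X < k ∧ ¬ Joins G A B (X : Set V)ᶜ := by
  classical
  let H (s : Finset (Sym2 V)) : SimpleGraph V := .fromEdgeSet (s.filter (· ∈ G.edgeSet))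
  have hHG (s : Finset (Sym2 V)) : H s ≤ G := fun u v h => by
    simp only [H, SimpleGraph.fromEdgeSet_adj, Finset.coe_filter] at h
    exact h.1.2
  refine or_iff_not_imp_left.2 fun hpacks => ?_
  have hsep (s : Finset (Sym2 V)) : ∃ X : Finset V, #X < k ∧ ¬ Joins (H s) A B (X : Set V)ᶜ :=
    (menger_fromEdgeSet _ k A B).resolve_left fun h =>
      hpacks (h.mono fun W hW => hW.mono (hHG s) le_rfl le_rfl le_rfl)
  choose X hXcard hX using hsep
  -- The separators of the finite subgraphs have a limit along an ultrafilter.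
  let U : Ultrafilter (Finset (Sym2 V)) := .of Filter.atTop
  obtain ⟨Y, hYcard, hY⟩ := exists_finset_mem_iff_eventually_mem U hXcard
  refine ⟨Y, hYcard, fun ⟨a, ha, b, hb, p, hp⟩ => ?_⟩
  have havoid : ∀ᶠ s in U, ∀ v ∈ p.support.toFinset, v ∉ X s :=
    (Filter.eventually_all_finset _).2 fun v hv => Ultrafilter.eventually_not.2 fun h =>
      hp v (List.mem_toFinset.1 hv) ((hY v).2 h)
  have hedges : ∀ᶠ s in U, p.edges.toFinset ≤ s :=
    Ultrafilter.of_le _ (Filter.eventually_ge_atTop _)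
  obtain ⟨s, hs, hps⟩ := (havoid.and hedges).exists
  have hmem : ∀ e ∈ p.edges, e ∈ (H s).edgeSet := fun e he => by
    have heG := p.edges_subset_edgeSet he
    have hes : e ∈ s := hps (List.mem_toFinset.2 he)
    simp [H, heG, hes, G.not_isDiag_of_mem_edgeSet heG]
  exact hX s ⟨a, ha, b, hb, p.transfer (H s) hmem, fun v hv =>
    hs v (List.mem_toFinset.2 (by simpa using hv))⟩

end Menger

section Gallai

open scoped Finset

variable {V : Type*} {G : SimpleGraph V} {A B C W : Set V} {k : ℕ}

theorem JoinsDistinct.exists_isPath (h : JoinsDistinct G A B W) :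
    ∃ a ∈ A, ∃ b ∈ B, a ≠ b ∧ ∃ p : G.Walk a b, p.IsPath ∧ (∀ v ∈ p.support, v ∈ W) ∧
      ∀ v ∈ p.support, v ∈ A ∪ B → v = a ∨ v = b := by
  classical
  obtain ⟨a, ha, b, hb, hab, p, hp⟩ := h
  induction hn : p.length using Nat.strong_induction_on generalizing a b with
  | _ n ih =>
    by_cases hinner : ∃ v ∈ p.support, v ∈ A ∪ B ∧ v ≠ a ∧ v ≠ b
    · obtain ⟨v, hv, hvA | hvB, hva, hvb⟩ := hinner
      · exact ih _ (hn ▸ p.length_dropUntil_lt_length hv hva) v hvA b hb hvb (p.dropUntil v hv)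
          (fun u hu => hp u (p.support_dropUntil_subset_support hv hu)) rfl
      · exact ih _ (hn ▸ p.length_takeUntil_lt_length hv hvb) a ha v hvB hva.symm (p.takeUntil v hv)
          (fun u hu => hp u (p.support_takeUntil_subset_support hv hu)) rfl
    · push Not at hinner
      refine ⟨a, ha, b, hb, hab, p.bypass, p.bypass_isPath,
        fun v hv => hp v (p.support_bypass_subset_support hv), fun v hv hvAB => ?_⟩
      exact or_iff_not_imp_left.2 (hinner v (p.support_bypass_subset_support hv) hvAB)

theorem Joins.exists_inter_subset_singleton (h : Joins G A B W) (hAB : Disjoint A B) :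
    ∃ Q ⊆ W, ∃ a ∈ A, ∃ b ∈ B, ReachableIn G Q a b ∧ Q ∩ B ⊆ {b} := by
  obtain ⟨a, ha, b, hb, hab⟩ := h
  have hne : a ≠ b := fun h => Set.disjoint_left.1 hAB ha (h ▸ hb)
  obtain ⟨a, ha, b, hb, -, p, -, hpW, hp⟩ :=
    JoinsDistinct.exists_isPath ⟨a, ha, b, hb, hne, hab⟩
  refine ⟨{v | v ∈ p.support}, hpW, a, ha, b, hb, ⟨p, fun _ hv => hv⟩, ?_⟩
  rintro v ⟨hvp, hvB⟩
  exact (hp v hvp (.inr hvB)).resolve_left fun h => Set.disjoint_left.1 hAB ha (h ▸ hvB)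

theorem exists_disjoint_joins_of_isPath {a b x y : V} {p : G.Walk a b} (hp : p.IsPath)
    (hx : x ∈ p.support) (hy : y ∈ p.support) (hxy : x ≠ y) :
    ∃ X Y : Set V, X ⊆ {v | v ∈ p.support} ∧ Y ⊆ {v | v ∈ p.support} ∧ Disjoint X Y ∧
      Joins G {a, b} {x} X ∧ Joins G {a, b} {y} Y := by
  obtain ⟨i, rfl, hi⟩ := SimpleGraph.Walk.mem_support_iff_exists_getVert.1 hx
  obtain ⟨j, rfl, hj⟩ := SimpleGraph.Walk.mem_support_iff_exists_getVert.1 hy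
  wlog hij : i < j generalizing i j
  · have hji : j < i := (not_lt.1 hij).lt_of_ne fun h => hxy (h ▸ rfl)
    obtain ⟨X, Y, hX, hY, hXY, hxX, hyY⟩ := this j hj hy i hi hx hxy.symm hji
    exact ⟨Y, X, hY, hX, hXY.symm, hyY, hxX⟩
  have htake : (p.take i).support = p.support.take (i + 1) := p.support_take i
  have hdrop : (p.drop j).support = p.support.drop j := by
    rw [p.drop_support_eq_support_drop_min, min_eq_left hj]
  refine ⟨{v | v ∈ (p.take i).support}, {v | v ∈ (p.drop j).support},
    fun v hv => List.mem_of_mem_take (htake ▸ hv), fun v hv => List.mem_of_mem_drop (hdrop ▸ hv),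
    Set.disjoint_left.2 fun v hv hv' => ?_,
    ⟨a, by simp, _, rfl, p.take i, fun _ hv => hv⟩,
    ⟨b, by simp, _, rfl, (p.drop j).reverse, fun v hv => by simpa using hv⟩⟩
  exact List.disjoint_take_drop hp.support_nodup hij (htake ▸ hv) (hdrop ▸ hv')

theorem Packs.cons {F : Set V → Prop} {W : Fin k → Set V} {N : Set V} (hW : ∀ i, F (W i))
    (hdisj : Pairwise (Function.onFun Disjoint W)) (hN : F N) (hNW : ∀ i, Disjoint N (W i)) :
    Packs F (k + 1) := by
  refine ⟨Fin.cons N W, Fin.cases hN hW, fun i j => ?_⟩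
  induction i using Fin.cases with
  | zero => induction j using Fin.cases with
    | zero => exact fun h => absurd rfl h
    | succ j => exact fun _ => hNW j
  | succ i => induction j using Fin.cases with
    | zero => exact fun _ => (hNW i).symm
    | succ j => exact fun h => hdisj fun hij => h (congrArg Fin.succ hij)

theorem Packs.replace_one_by_two {F : Set V → Prop} {W : Fin k → Set V} {M N : Set V} (i : Fin k)
    (hW : ∀ j, F (W j)) (hdisj : Pairwise (Function.onFun Disjoint W)) (hM : F M) (hN : F N)
    (hMN : Disjoint M N) (hMW : ∀ j ≠ i, Disjoint M (W j)) (hNW : ∀ j ≠ i, Disjoint N (W j)) :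
    Packs F (k + 1) := by
  refine Packs.cons (W := Function.update W i N) (fun j => ?_) (fun j l hjl => ?_) hM fun j => ?_
  · obtain rfl | hj := eq_or_ne j i <;> simp [*]
  · obtain rfl | hj := eq_or_ne j i
    · simpa [Function.onFun, hjl.symm] using hNW l hjl.symm
    · obtain rfl | hl := eq_or_ne l i
      · simpa [Function.onFun, hj] using (hNW j hj).symm
      · simpa [Function.onFun, hj, hl] using hdisj hjl
  · obtain rfl | hj := eq_or_ne j i <;> simp [*]

theorem Joins.joinsDistinct_union {X Q : Set V} {c y : V} (h : Joins G A {y} X) (hA : A ⊆ C)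
    (hXW : X ⊆ W) (hc : c ∈ C \ W) (hcy : ReachableIn G Q c y) :
    JoinsDistinct G C C (X ∪ Q) := by
  obtain ⟨a, ha, _, rfl, hay⟩ := h
  exact ⟨a, hA ha, c, hc.1, fun hac => hc.2 (hac ▸ hXW hay.left_mem),
    (hay.mono le_rfl Set.subset_union_left).trans (hcy.symm.mono le_rfl Set.subset_union_right)⟩

-- Two of the `k + 1` legs end on the same path, which they split into two new ones.
theorem packs_joinsDistinct_succ_of_packs_joins {a b : Fin k → V} (p : ∀ i, G.Walk (a i) (b i))
    (hp : ∀ i, (p i).IsPath) (hab : ∀ i, a i ≠ b i) (hC : ∀ i, {a i, b i} ⊆ C)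
    (hdisj : Pairwise (Function.onFun Disjoint fun i => {v | v ∈ (p i).support}))
    (hlegs : Packs (Joins G (C \ ⋃ i, {v | v ∈ (p i).support}) (⋃ i, {v | v ∈ (p i).support}))
      (k + 1)) : Packs (JoinsDistinct G C C) (k + 1) := by
  set P : Fin k → Set V := fun i => {v | v ∈ (p i).support}
  obtain ⟨L, hL, hLdisj⟩ := hlegs
  choose Q hQL c hc y hy hcy hQy using fun j =>
    (hL j).exists_inter_subset_singleton Set.disjoint_sdiff_left
  have hQP {j : Fin (k + 1)} {X Y : Set V} (hXY : Disjoint X Y) (hX : X ⊆ ⋃ i, P i)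
      (hyY : y j ∈ Y) : Disjoint (Q j) X := Set.disjoint_left.2 fun v hvQ hvX =>
    Set.disjoint_left.1 hXY hvX (hQy j ⟨hvQ, hX hvX⟩ ▸ hyY)
  choose f hf using fun j => Set.mem_iUnion.1 (hy j)
  obtain ⟨j, l, hjl, hfjl⟩ := Fintype.exists_ne_map_eq_of_card_lt f (by simp)
  have hQdisj : Disjoint (Q j) (Q l) := (hLdisj hjl).mono (hQL j) (hQL l)
  have hyne : y j ≠ y l := fun h =>
    Set.disjoint_left.1 hQdisj (hcy j).right_mem (h ▸ (hcy l).right_mem)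
  obtain ⟨X, Y, hX, hY, hXY, hXj, hYl⟩ :=
    exists_disjoint_joins_of_isPath (hp (f j)) (hf j) (hfjl ▸ hf l) hyne
  have hXP : X ⊆ ⋃ i, P i := hX.trans (Set.subset_iUnion P (f j))
  have hYP : Y ⊆ ⋃ i, P i := hY.trans (Set.subset_iUnion P (f j))
  refine Packs.replace_one_by_two (W := P) (M := X ∪ Q j) (N := Y ∪ Q l) (f j)
    (fun i => ⟨a i, hC i (by simp), b i, hC i (by simp), hab i, p i, fun _ hv => hv⟩) hdisj
    (hXj.joinsDistinct_union (hC (f j)) hXP (hc j) (hcy j))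
    (hYl.joinsDistinct_union (hC (f j)) hYP (hc l) (hcy l))
    ?_ (fun i hi => ?_) (fun i hi => ?_)
  · exact Set.disjoint_union_left.2
      ⟨Set.disjoint_union_right.2 ⟨hXY, (hQP hXY hXP hYl.mem_of_singleton).symm⟩,
        Set.disjoint_union_right.2 ⟨hQP hXY.symm hYP hXj.mem_of_singleton, hQdisj⟩⟩
  · exact Set.disjoint_union_left.2 ⟨(hdisj hi.symm).mono_left hX,
      hQP (hdisj hi) (Set.subset_iUnion P i) (hf j)⟩
  · exact Set.disjoint_union_left.2 ⟨(hdisj hi.symm).mono_left hY,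
      hQP (hdisj hi) (Set.subset_iUnion P i) (hfjl ▸ hf l)⟩

theorem exists_hitting_set_of_not_packs_succ (hk : Packs (JoinsDistinct G C C) k)
    (hk' : ¬ Packs (JoinsDistinct G C C) (k + 1)) :
    ∃ X : Finset V, #X ≤ 3 * k ∧ ¬ JoinsDistinct G C C (X : Set V)ᶜ := by
  classical
  obtain ⟨W, hW, hWdisj⟩ := hk
  choose a ha b hb hab p hp hpW hpC using fun i => (hW i).exists_isPath
  set P : Fin k → Set V := fun i => {v | v ∈ (p i).support}
  have hdisj : Pairwise (Function.onFun Disjoint P) :=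
    fun i j hij => (hWdisj hij).mono (hpW i) (hpW j)
  obtain hlegs | ⟨X, hX, hsep⟩ := menger G (C \ ⋃ i, P i) (⋃ i, P i) (k + 1)
  · exact absurd (packs_joinsDistinct_succ_of_packs_joins p hp hab
      (fun i => Set.pair_subset (ha i) (hb i)) hdisj hlegs) hk'
  refine ⟨X ∪ Finset.univ.image a ∪ Finset.univ.image b, ?_, ?_⟩
  · have hcard : ∀ f : Fin k → V, #(Finset.univ.image f) ≤ k := fun f => by
      simpa using Finset.card_image_le (s := Finset.univ) (f := f)
    grind [Finset.card_union_le]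
  · rintro ⟨c, hc, d, hd, hcd, q, hq⟩
    have hcP : c ∉ ⋃ i, P i := fun hcP => by
      obtain ⟨i, hi⟩ := Set.mem_iUnion.1 hcP
      refine hq c q.start_mem_support ?_
      obtain rfl | rfl := hpC i c hi (.inl hc) <;> simp
    refine hk' (Packs.cons (W := P) (N := {v | v ∈ q.support}) (fun i => ?_) hdisj ?_ fun i => ?_)
    · exact ⟨a i, ha i, b i, hb i, hab i, p i, fun _ hv => hv⟩
    · exact ⟨c, hc, d, hd, hcd, q, fun _ hv => hv⟩
    · refine Set.disjoint_left.2 fun v hvq hvP => hsep ⟨c, ⟨hc, hcP⟩, v,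
        Set.mem_iUnion_of_mem i hvP, q.takeUntil v hvq, fun u hu huX => ?_⟩
      exact hq u (q.support_takeUntil_subset_support hvq hu) (by simp_all)

theorem gallai (G : SimpleGraph V) (C : Set V) (k : ℕ) :
    Packs (JoinsDistinct G C C) k ∨
      ∃ X : Finset V, #X ≤ 3 * k ∧ ¬ JoinsDistinct G C C (X : Set V)ᶜ := by
  induction k with
  | zero => exact .inl ⟨Fin.elim0, fun i => i.elim0, fun i => i.elim0⟩
  | succ k ih =>
    refine or_iff_not_imp_left.2 fun hk' => ?_
    obtain ⟨X, hX, hsep⟩ := ih.elim (exists_hitting_set_of_not_packs_succ · hk') id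
    exact ⟨X, by lia, hsep⟩

theorem packs_or_exists_hitting_set_joinsDistinct (G : SimpleGraph V) (A B : Set V) (k : ℕ) :
    Packs (JoinsDistinct G A B) k ∨
      ∃ X : Finset V, #X ≤ 5 * k ∧ ¬ JoinsDistinct G A B (X : Set V)ᶜ := by
  classical
  refine or_iff_not_imp_left.2 fun hk => ?_
  have joinsDistinct_of_joins {A B W : Set V} (h : Joins G (A \ B) B W) :
      JoinsDistinct G A B W := by
    obtain ⟨a, ha, b, hb, hab⟩ := h
    exact ⟨a, ha.1, b, hb, fun h => ha.2 (h ▸ hb), hab⟩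
  obtain ⟨X, hX, hXsep⟩ := (menger G (A \ B) B k).resolve_left fun h =>
    hk (h.mono fun W hW => joinsDistinct_of_joins hW)
  obtain ⟨Y, hY, hYsep⟩ := (menger G (B \ A) A k).resolve_left fun h =>
    hk (h.mono fun W hW => (joinsDistinct_of_joins hW).symm)
  obtain ⟨Z, hZ, hZsep⟩ := (gallai G (A ∩ B) k).resolve_left fun h =>
    hk (h.mono fun W hW => hW.mono Set.inter_subset_left Set.inter_subset_right le_rfl)
  refine ⟨X ∪ Y ∪ Z, by grind [Finset.card_union_le], fun ⟨a, ha, b, hb, hab, h⟩ => ?_⟩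
  have within {T : Finset V} (hT : T ⊆ X ∪ Y ∪ Z) : ReachableIn G (T : Set V)ᶜ a b :=
    h.mono le_rfl (Set.compl_subset_compl.2 (Finset.coe_subset.2 hT))
  by_cases haB : a ∈ B
  · by_cases hbA : b ∈ A
    · exact hZsep ⟨a, ⟨ha, haB⟩, b, ⟨hbA, hb⟩, hab, within (by grind)⟩
    · exact hYsep ⟨b, ⟨hb, hbA⟩, a, ha, (within (by grind)).symm⟩
  · exact hXsep ⟨a, ⟨ha, haB⟩, b, hb, within (by grind)⟩

end Gallai

section Transfer

variable {V Γ : Type} {G : LabGraph V Γ} {A B W : Set V} {P : GPath G} {a b : V}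

/-- The simple graph underlying a labelled multigraph: parallel edges are identified and the labels
are forgotten. -/
def LabGraph.toSimpleGraph (G : LabGraph V Γ) : SimpleGraph V where
  Adj u v := ∃ e, G.ends e = s(u, v)
  symm := ⟨fun _ _ ⟨e, he⟩ => ⟨e, he.trans Sym2.eq_swap⟩⟩
  loopless := ⟨fun _ ⟨e, he⟩ => G.loopless e (by simp [he])⟩

namespace GPath

theorem reachableIn_verts (P : GPath G) (i : Fin (P.n + 1)) :
    ReachableIn G.toSimpleGraph P.verts P.first (P.v i) := by
  induction i using Fin.induction with
  | zero => exact .refl ⟨0, rfl⟩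
  | succ i ih => exact ih.trans (.of_adj ⟨P.e i, P.incid i⟩ ⟨_, rfl⟩ ⟨_, rfl⟩)

/-- The path of a labelled multigraph that follows a path of the underlying simple graph, along an
arbitrary choice among parallel edges. -/
noncomputable def ofIsPath (p : G.toSimpleGraph.Walk a b) (hp : p.IsPath) : GPath G where
  n := p.length
  v i := p.getVert i
  e i := (p.adj_getVert_succ i.is_lt).choose
  inj i j hij := Fin.ext (hp.getVert_injOn i.is_le j.is_le hij)
  incid i := (p.adj_getVert_succ i.is_lt).choose_spec

theorem first_ofIsPath (p : G.toSimpleGraph.Walk a b) (hp : p.IsPath) :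
    (ofIsPath p hp).first = a := p.getVert_zero

theorem last_ofIsPath (p : G.toSimpleGraph.Walk a b) (hp : p.IsPath) :
    (ofIsPath p hp).last = b := p.getVert_length

theorem verts_ofIsPath_subset (p : G.toSimpleGraph.Walk a b) (hp : p.IsPath) :
    (ofIsPath p hp).verts ⊆ {v | v ∈ p.support} := by
  rintro _ ⟨i, rfl⟩
  exact p.getVert_mem_support i

theorem Internal.mem_verts {x : V} : P.Internal x → x ∈ P.verts := fun ⟨i, hi, _⟩ => ⟨i, hi⟩

theorem Internal.ne_first {x : V} : P.Internal x → x ≠ P.first :=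
  fun ⟨_, hi, h0, _⟩ hx => h0 (P.inj (hi.trans hx))

theorem Internal.ne_last {x : V} : P.Internal x → x ≠ P.last :=
  fun ⟨_, hi, _, hn⟩ hx => hn (P.inj (hi.trans hx))

end GPath

theorem IsABPath.joinsDistinct (h : IsABPath A B P) :
    JoinsDistinct G.toSimpleGraph A B P.verts := by
  obtain ⟨hn, hends, -⟩ := h
  have hne : P.first ≠ P.last := fun h => hn.ne (congrArg Fin.val (P.inj h))
  have hreach := P.reachableIn_verts (Fin.last P.n)
  rcases hends with ⟨hA, hB⟩ | ⟨hB, hA⟩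
  · exact ⟨_, hA, _, hB, hne, hreach⟩
  · exact ⟨_, hA, _, hB, hne.symm, hreach.symm⟩

theorem JoinsDistinct.exists_isABPath (h : JoinsDistinct G.toSimpleGraph A B W) :
    ∃ P : GPath G, IsABPath A B P ∧ P.verts ⊆ W := by
  obtain ⟨a, ha, b, hb, hab, p, hp, hpW, hpAB⟩ := h.exists_isPath
  have hverts := GPath.verts_ofIsPath_subset p hp
  refine ⟨.ofIsPath p hp, ⟨?_, .inl ⟨?_, ?_⟩, fun x hx hxAB => ?_⟩, fun v hv => hpW v (hverts hv)⟩
  · exact Nat.pos_of_ne_zero fun h0 => hab (SimpleGraph.Walk.eq_of_length_eq_zero h0)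
  · rwa [GPath.first_ofIsPath]
  · rwa [GPath.last_ofIsPath]
  · rcases hpAB x (hverts hx.mem_verts) hxAB with rfl | rfl
    · exact hx.ne_first (GPath.first_ofIsPath p hp).symm
    · exact hx.ne_last (GPath.last_ofIsPath p hp).symm

end Transfer

section Orientation

variable {V Γ : Type} {G : LabGraph V Γ} {A B : Set V} {P : GPath G}

namespace GPath

/-- The same path traversed in the opposite direction. -/
def reverse (P : GPath G) : GPath G where
  n := P.n
  v i := P.v i.rev
  e i := P.e i.rev
  inj _ _ h := Fin.rev_injective (P.inj h)
  incid i := by rw [P.incid, Sym2.eq_swap, Fin.rev_castSucc, Fin.rev_succ]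

theorem verts_reverse (P : GPath G) : P.reverse.verts = P.verts :=
  Fin.rev_surjective.range_comp P.v

theorem glen_reverse [AddCommMonoid Γ] (P : GPath G) : P.reverse.glen = P.glen :=
  Equiv.sum_comp Fin.revPerm fun i => G.lab (P.e i)

theorem first_reverse (P : GPath G) : P.reverse.first = P.last := congrArg P.v (Fin.rev_zero _)

theorem last_reverse (P : GPath G) : P.reverse.last = P.first := congrArg P.v (Fin.rev_last _)

theorem internal_of_mem_verts {x : V} (hx : x ∈ P.verts) (hfirst : x ≠ P.first)
    (hlast : x ≠ P.last) : P.Internal x := by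
  obtain ⟨i, rfl⟩ := hx
  exact ⟨i, rfl, fun h => hfirst (congrArg P.v h), fun h => hlast (congrArg P.v h)⟩

theorem Internal.of_reverse {x : V} (hx : P.reverse.Internal x) : P.Internal x :=
  internal_of_mem_verts (P.verts_reverse ▸ hx.mem_verts) (P.last_reverse ▸ hx.ne_last)
    (P.first_reverse ▸ hx.ne_first)

end GPath

/-- An `A`-`B`-path traversed from `A` to `B`. -/
structure IsOrientedABPath (A B : Set V) (P : GPath G) : Prop where
  n_pos : 0 < P.n
  first_mem : P.first ∈ A
  last_mem : P.last ∈ B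
  notMem_of_internal : ∀ x, P.Internal x → x ∉ A ∪ B

theorem IsABPath.exists_isOrientedABPath [AddCommMonoid Γ] (h : IsABPath A B P) :
    ∃ Q : GPath G, IsOrientedABPath A B Q ∧ Q.verts = P.verts ∧ Q.glen = P.glen := by
  obtain ⟨hn, ⟨hA, hB⟩ | ⟨hB, hA⟩, hinternal⟩ := h
  · exact ⟨P, ⟨hn, hA, hB, hinternal⟩, rfl, rfl⟩
  · exact ⟨P.reverse, ⟨hn, P.first_reverse ▸ hA, P.last_reverse ▸ hB,
      fun x hx => hinternal x hx.of_reverse⟩, P.verts_reverse, P.glen_reverse⟩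

theorem IsOrientedABPath.v_mem_left_iff (h : IsOrientedABPath A B P) (hAB : Disjoint A B)
    {i : Fin (P.n + 1)} : P.v i ∈ A ↔ i = 0 := by
  refine ⟨fun hi => by_contra fun h0 => ?_, fun hi => hi ▸ h.first_mem⟩
  have hlast : i ≠ Fin.last P.n := by
    rintro rfl
    exact Set.disjoint_left.1 hAB hi h.last_mem
  exact h.notMem_of_internal _ ⟨i, rfl, h0, hlast⟩ (.inl hi)

theorem IsOrientedABPath.v_mem_right_iff (h : IsOrientedABPath A B P) (hAB : Disjoint A B)
    {i : Fin (P.n + 1)} : P.v i ∈ B ↔ i = Fin.last P.n := by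
  refine ⟨fun hi => by_contra fun hlast => ?_, fun hi => hi ▸ h.last_mem⟩
  have h0 : i ≠ 0 := by
    rintro rfl
    exact Set.disjoint_left.1 hAB h.first_mem hi
  exact h.notMem_of_internal _ ⟨i, rfl, h0, hlast⟩ (.inr hi)

end Orientation

section Tent

variable {Γ : Type}

/-- A directed edge of the tent graph, from `u` to `v`. A vertex `(c, d)` lies in column `c` at
depth `d`; edges run diagonally from each column to the next. By the parity condition no two edges
cross, so that the graph is planar. -/
def TentStep (u v : ℕ × ℕ) : Prop :=
  u.1 + 1 = v.1 ∧ (u.2 = v.2 + 1 ∨ v.2 = u.2 + 1) ∧ Even (u.1 + u.2)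

/-- The counterexample graph: the diagonal grid with the label `μ` on the edges leaving column `0`,
plus the label `g` on the edges whose right end lies at depth `0`. -/
def tentGraph [AddMonoid Γ] (μ g : Γ) : LabGraph (ℕ × ℕ) Γ where
  E := {e : (ℕ × ℕ) × (ℕ × ℕ) // TentStep e.1 e.2}
  ends e := s(e.1.1, e.1.2)
  loopless e he := by
    have hcol := e.2.1
    rw [show e.1.1 = e.1.2 from he] at hcol
    omega
  lab e := (if e.1.1.1 = 0 then μ else 0) + (if e.1.2.2 = 0 then g else 0)

/-- The vertices in the given column. -/
def tentColumn (c : ℕ) : Set (ℕ × ℕ) := {x | x.1 = c}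

theorem disjoint_tentColumn {c d : ℕ} (h : c ≠ d) : Disjoint (tentColumn c) (tentColumn d) :=
  Set.disjoint_left.2 fun _ hc hd => h (hc.symm.trans hd)

/-- The depth, over column `i`, of the tent with apex in column `c`. It is the distance `|i - c|`,
since one of the two truncated differences vanishes. -/
def tentDepth (c i : ℕ) : ℕ := c - i + (i - c)

theorem tentStep_tentDepth {c : ℕ} (hc : Even c) (i : ℕ) :
    TentStep (i, tentDepth c i) (i + 1, tentDepth c (i + 1)) := by
  refine ⟨rfl, ?_, ?_⟩
  · dsimp only [tentDepth]
    omega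
  · rw [Nat.even_iff] at hc ⊢
    dsimp only [tentDepth]
    omega

/-- The path descending from an apex at depth `0` in column `c` on both sides, from column `0` to
column `n`. -/
def tentPath [AddMonoid Γ] (μ g : Γ) {c : ℕ} (hc : Even c) (n : ℕ) : GPath (tentGraph μ g) where
  n := n
  v i := (i, tentDepth c i)
  e i := ⟨((i, tentDepth c i), (i + 1, tentDepth c (i + 1))), tentStep_tentDepth hc i⟩
  inj _ _ h := Fin.ext (congrArg Prod.fst h)
  incid _ := rfl

theorem isABPath_tentPath [AddMonoid Γ] (μ g : Γ) {c n : ℕ} (hc : Even c) (hn : 0 < n) :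
    IsABPath (tentColumn 0) (tentColumn n) (tentPath μ g hc n) := by
  refine ⟨hn, .inl ⟨rfl, rfl⟩, ?_⟩
  rintro _ ⟨i, rfl, h0, hlast⟩ (hi | hi)
  · exact h0 (Fin.ext hi)
  · exact hlast (Fin.ext hi)

theorem glen_tentPath [AddCommMonoid Γ] (μ g : Γ) {c n : ℕ} (hc : Even c) (hc0 : 0 < c)
    (hcn : c ≤ n) : (tentPath μ g hc n).glen = μ + g := by
  have hdepth (i : ℕ) : tentDepth c (i + 1) = 0 ↔ i = c - 1 := by
    unfold tentDepth
    omega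
  change ∑ i : Fin n, ((if (i : ℕ) = 0 then μ else 0) +
    if tentDepth c (i + 1) = 0 then g else 0) = _
  simp only [hdepth, Finset.sum_add_distrib]
  rw [Fin.sum_univ_eq_sum_range (fun i => if i = 0 then μ else 0),
    Fin.sum_univ_eq_sum_range (fun i => if i = c - 1 then g else 0), Finset.sum_ite_eq',
    Finset.sum_ite_eq', if_pos (Finset.mem_range.2 (by omega)),
    if_pos (Finset.mem_range.2 (by omega))]

-- A vertex `x` lies on at most two tents, with apices in the columns `x.1 + x.2` and `x.1 - x.2`.
theorem exists_tentPath_disjoint [AddMonoid Γ] (μ g : Γ) {X : Set (ℕ × ℕ)} {m : ℕ}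
    (hX : X.Finite) (hcard : X.ncard ≤ m) :
    ∃ (c : ℕ) (hc : Even c), 0 < c ∧ c ≤ 4 * m + 2 ∧
      ∀ n, Disjoint (tentPath μ g hc n).verts X := by
  lift X to Finset (ℕ × ℕ) using hX
  rw [Set.ncard_coe_finset] at hcard
  let hitApices := X.image (fun x => x.1 + x.2) ∪ X.image (fun x => x.1 - x.2)
  let apices := (Finset.Icc 1 (2 * m + 1)).image (2 * ·)
  have hlt : hitApices.card < apices.card := calc
    hitApices.card ≤ X.card + X.card :=
      (Finset.card_union_le _ _).trans (add_le_add Finset.card_image_le Finset.card_image_le)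
    _ < 2 * m + 1 := by omega
    _ = apices.card := by
      rw [Finset.card_image_of_injective _ (mul_right_injective₀ (two_ne_zero' ℕ)), Nat.card_Icc,
        Nat.add_sub_cancel]
  obtain ⟨c, hc, hcX⟩ := Finset.exists_mem_notMem_of_card_lt_card hlt
  obtain ⟨j, hj, rfl⟩ := Finset.mem_image.1 hc
  rw [Finset.mem_Icc] at hj
  refine ⟨2 * j, even_two_mul j, by omega, by omega, fun n => Set.disjoint_left.2 ?_⟩
  rintro _ ⟨i, rfl⟩ hiX
  simp only [hitApices, Finset.mem_union, Finset.mem_image, not_or, not_exists, not_and] at hcX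
  obtain ⟨hsum, hdiff⟩ := And.intro (hcX.1 _ hiX) (hcX.2 _ hiX)
  dsimp only [tentPath, tentDepth] at hsum hdiff
  omega

theorem tentGraph_lab_eq [AddMonoid Γ] {μ g : Γ} {P : GPath (tentGraph μ g)}
    (hdepth : ∀ x ∈ P.verts, x.2 ≠ 0) (i : Fin P.n) : (tentGraph μ g).lab (P.e i) =
      if (P.v i.castSucc).1 = 0 ∨ (P.v i.succ).1 = 0 then μ else 0 := by
  have hcol := (P.e i).2.1
  have hl := hdepth _ ⟨i.castSucc, rfl⟩
  have hr := hdepth _ ⟨i.succ, rfl⟩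
  simp only [tentGraph]
  rcases Sym2.eq_iff.1 (P.incid i) with ⟨h1, h2⟩ | ⟨h1, h2⟩
  · rw [h1, h2] at hcol ⊢
    rw [if_neg hr, add_zero]
    exact if_congr (by omega) rfl rfl
  · rw [h1, h2] at hcol ⊢
    rw [if_neg hl, add_zero]
    exact if_congr (by omega) rfl rfl

theorem IsOrientedABPath.glen_eq_of_depth_ne_zero [AddCommMonoid Γ] {μ g : Γ} {n : ℕ}
    {P : GPath (tentGraph μ g)}
    (hP : IsOrientedABPath (tentColumn 0) (tentColumn n) P) (hn : n ≠ 0)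
    (hdepth : ∀ x ∈ P.verts, x.2 ≠ 0) : P.glen = μ := by
  have hcol {i : Fin (P.n + 1)} : (P.v i).1 = 0 ↔ i = 0 :=
    hP.v_mem_left_iff (disjoint_tentColumn hn.symm)
  have hlab (i : Fin P.n) : (tentGraph μ g).lab (P.e i) = if i = ⟨0, hP.n_pos⟩ then μ else 0 := by
    rw [tentGraph_lab_eq hdepth]
    refine if_congr ?_ rfl rfl
    simp [hcol, Fin.ext_iff]
  rw [GPath.glen, Finset.sum_congr rfl fun i _ => hlab i, Finset.sum_ite_eq',
    if_pos (Finset.mem_univ _)]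

section Crossing

variable [AddMonoid Γ] {μ g : Γ} {n : ℕ} {p q u v : ℕ × ℕ}

/-- The indicator of `u` lying in the column of `p` strictly above `p`. -/
def aboveIndicator (p u : ℕ × ℕ) : ℤ := if u.1 = p.1 ∧ u.2 < p.2 then 1 else 0

/-- The signed number of times that the step from `u` to `v` passes from the part of the column of
`p` above `p` to the next column. -/
def signedCrossing (p u v : ℕ × ℕ) : ℤ :=
  (if v.1 = p.1 + 1 then aboveIndicator p u else 0) -
    (if u.1 = p.1 + 1 then aboveIndicator p v else 0)

/-- The total signed number of crossings of the path `P` above the vertex `p`. It tells whether `p`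
lies below `P` or not. -/
def crossingNumber (P : GPath (tentGraph μ g)) (p : ℕ × ℕ) : ℤ :=
  ∑ i : Fin P.n, signedCrossing p (P.v i.castSucc) (P.v i.succ)

theorem signedCrossing_sub_signedCrossing (hpq : TentStep p q) (huv : TentStep u v ∨ TentStep v u)
    (hup : u ≠ p) (huq : u ≠ q) (hvp : v ≠ p) (hvq : v ≠ q) :
    signedCrossing p u v - signedCrossing q u v = aboveIndicator q v - aboveIndicator q u := by
  simp only [TentStep, Nat.even_iff, ne_eq, Prod.ext_iff] at *
  unfold signedCrossing aboveIndicator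
  split_ifs <;> omega

theorem signedCrossing_of_fst_eq_zero (hp : p.1 = 0) (huv : TentStep u v ∨ TentStep v u) :
    signedCrossing p u v = aboveIndicator p u - aboveIndicator p v := by
  simp only [TentStep] at huv
  unfold signedCrossing aboveIndicator
  split_ifs <;> omega

theorem tentStep_or_tentStep (P : GPath (tentGraph μ g)) (i : Fin P.n) :
    TentStep (P.v i.castSucc) (P.v i.succ) ∨ TentStep (P.v i.succ) (P.v i.castSucc) := by
  have hstep := (P.e i).2
  rcases Sym2.eq_iff.1 (P.incid i) with ⟨hl, hr⟩ | ⟨hl, hr⟩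
  · exact .inl (hl ▸ hr ▸ hstep)
  · exact .inr (hl ▸ hr ▸ hstep)

theorem crossingNumber_of_snd_eq_zero (P : GPath (tentGraph μ g)) (hp : p.2 = 0) :
    crossingNumber P p = 0 := by
  simp [crossingNumber, signedCrossing, aboveIndicator, hp]

theorem sum_succ_sub_castSucc {M : Type*} [AddCommGroup M] {n : ℕ} (f : Fin (n + 1) → M) :
    ∑ i : Fin n, (f i.succ - f i.castSucc) = f (Fin.last n) - f 0 := by
  rw [Finset.sum_sub_distrib, sub_eq_sub_iff_add_eq_add, add_comm, ← Fin.sum_univ_succ,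
    Fin.sum_univ_castSucc, add_comm]

theorem aboveIndicator_of_fst_ne (h : u.1 ≠ p.1) : aboveIndicator p u = 0 := if_neg fun hu => h hu.1

theorem crossingNumber_of_fst_eq_zero (P : GPath (tentGraph μ g)) (hp : p.1 = 0)
    (hlast : P.last.1 ≠ 0) : crossingNumber P p = aboveIndicator p P.first := calc
  crossingNumber P p
      = ∑ i : Fin P.n, (-aboveIndicator p (P.v i.succ) - -aboveIndicator p (P.v i.castSucc)) :=
    Finset.sum_congr rfl fun i _ => by
      rw [signedCrossing_of_fst_eq_zero hp (tentStep_or_tentStep P i), neg_sub_neg]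
  _ = -aboveIndicator p P.last - -aboveIndicator p P.first :=
    sum_succ_sub_castSucc fun i => -aboveIndicator p (P.v i)
  _ = aboveIndicator p P.first := by
    rw [aboveIndicator_of_fst_ne (hp ▸ hlast), neg_zero, zero_sub, neg_neg]

theorem crossingNumber_eq_of_tentStep {P : GPath (tentGraph μ g)} (hpq : TentStep p q)
    (hp : p ∉ P.verts) (hq : q ∉ P.verts) (hfirst : P.first.1 = 0) (hlast : P.last.1 ≠ q.1) :
    crossingNumber P p = crossingNumber P q := by
  have hne {x : ℕ × ℕ} (hx : x ∉ P.verts) (i) : P.v i ≠ x := fun h => hx ⟨i, h⟩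
  have hfirst' : P.first.1 ≠ q.1 := by
    have := hpq.1
    omega
  rw [← sub_eq_zero]
  calc crossingNumber P p - crossingNumber P q
      = ∑ i : Fin P.n, (aboveIndicator q (P.v i.succ) - aboveIndicator q (P.v i.castSucc)) := by
        rw [crossingNumber, crossingNumber, ← Finset.sum_sub_distrib]
        exact Finset.sum_congr rfl fun i _ => signedCrossing_sub_signedCrossing hpq
          (tentStep_or_tentStep P i) (hne hp _) (hne hq _) (hne hp _) (hne hq _)
    _ = aboveIndicator q P.last - aboveIndicator q P.first :=
      sum_succ_sub_castSucc fun i => aboveIndicator q (P.v i)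
    _ = 0 := by rw [aboveIndicator_of_fst_ne hlast, aboveIndicator_of_fst_ne hfirst', sub_zero]

theorem crossingNumber_v_eq {P Q : GPath (tentGraph μ g)} (hdisj : Disjoint P.verts Q.verts)
    (hP : P.first.1 = 0) (hQ : ∀ i, i ≠ Fin.last Q.n → (Q.v i).1 ≠ P.last.1)
    (i : Fin (Q.n + 1)) (hi : i ≠ Fin.last Q.n) :
    crossingNumber P (Q.v i) = crossingNumber P Q.first := by
  induction i using Fin.induction with
  | zero => rfl
  | succ i ih =>
    have hi' : i.castSucc ≠ Fin.last Q.n := i.castSucc_ne_last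
    have hoff (j) : Q.v j ∉ P.verts := Set.disjoint_right.1 hdisj ⟨j, rfl⟩
    rw [← ih hi']
    rcases tentStep_or_tentStep Q i with h | h
    · exact (crossingNumber_eq_of_tentStep h (hoff _) (hoff _) hP (hQ _ hi).symm).symm
    · exact crossingNumber_eq_of_tentStep h (hoff _) (hoff _) hP (hQ _ hi').symm

theorem IsOrientedABPath.even_last {P : GPath (tentGraph μ g)} {A B : Set (ℕ × ℕ)}
    (hP : IsOrientedABPath A B P) : Even (P.last.1 + P.last.2) := by
  let i : Fin P.n := ⟨P.n - 1, Nat.sub_one_lt_of_lt hP.n_pos⟩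
  have hi : P.v i.succ = P.last :=
    congrArg P.v (Fin.ext (Nat.sub_add_cancel (Nat.one_le_of_lt hP.n_pos)))
  have hstep := hi ▸ tentStep_or_tentStep P i
  simp only [TentStep, Nat.even_iff] at hstep ⊢
  omega

theorem IsOrientedABPath.first_snd_le {P Q : GPath (tentGraph μ g)}
    (hP : IsOrientedABPath (tentColumn 0) (tentColumn n) P)
    (hQ : IsOrientedABPath (tentColumn 0) (tentColumn n) Q) (hn : Odd n)
    (hdisj : Disjoint P.verts Q.verts) (hdepth : ∃ x ∈ Q.verts, x.2 = 0) :
    Q.first.2 ≤ P.first.2 := by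
  obtain ⟨_, ⟨i, rfl⟩, hi⟩ := hdepth
  have hPlast : P.last.1 = n := hP.last_mem
  have hcol {j} : (Q.v j).1 = P.last.1 ↔ j = Fin.last Q.n := by
    rw [hPlast]
    exact hQ.v_mem_right_iff (disjoint_tentColumn hn.pos.ne)
  have hi_ne : i ≠ Fin.last Q.n := by
    rintro rfl
    have heven := hQ.even_last
    rw [show Q.last.2 = 0 from hi, show Q.last.1 = n from hQ.last_mem] at heven
    exact Nat.not_even_iff_odd.2 hn heven
  have habove : aboveIndicator Q.first P.first = 0 := calc
    aboveIndicator Q.first P.first = crossingNumber P Q.first :=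
      (crossingNumber_of_fst_eq_zero P hQ.first_mem (hPlast ▸ hn.pos.ne')).symm
    _ = crossingNumber P (Q.v i) :=
      (crossingNumber_v_eq hdisj hP.first_mem (fun _ => mt hcol.1) i hi_ne).symm
    _ = 0 := crossingNumber_of_snd_eq_zero P hi
  by_contra! hlt
  exact one_ne_zero ((if_pos ⟨hP.first_mem.trans hQ.first_mem.symm, hlt⟩).symm.trans habove)

end Crossing

variable [AddCommMonoid Γ] {μ g : Γ} {n : ℕ}

theorem IsOrientedABPath.not_disjoint_of_glen_ne {P Q : GPath (tentGraph μ g)}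
    (hP : IsOrientedABPath (tentColumn 0) (tentColumn n) P)
    (hQ : IsOrientedABPath (tentColumn 0) (tentColumn n) Q) (hn : Odd n)
    (hPμ : P.glen ≠ μ) (hQμ : Q.glen ≠ μ) : ¬ Disjoint P.verts Q.verts := by
  intro hdisj
  have exists_depth_zero {R : GPath (tentGraph μ g)}
      (hR : IsOrientedABPath (tentColumn 0) (tentColumn n) R) (hRμ : R.glen ≠ μ) :
      ∃ x ∈ R.verts, x.2 = 0 := by
    by_contra! hdepth
    exact hRμ (hR.glen_eq_of_depth_ne_zero hn.pos.ne' hdepth)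
  have hfirst : P.first = Q.first :=
    Prod.ext (hP.first_mem.trans hQ.first_mem.symm) <| le_antisymm
      (hQ.first_snd_le hP hn hdisj.symm (exists_depth_zero hP hPμ))
      (hP.first_snd_le hQ hn hdisj (exists_depth_zero hQ hQμ))
  exact Set.disjoint_left.1 hdisj ⟨0, rfl⟩ ⟨0, hfirst.symm⟩

theorem IsABPath.not_disjoint_of_glen_ne {P Q : GPath (tentGraph μ g)}
    (hP : IsABPath (tentColumn 0) (tentColumn n) P) (hQ : IsABPath (tentColumn 0) (tentColumn n) Q)
    (hn : Odd n) (hPμ : P.glen ≠ μ) (hQμ : Q.glen ≠ μ) : ¬ Disjoint P.verts Q.verts := by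
  obtain ⟨P', hP', hPverts, hPglen⟩ := hP.exists_isOrientedABPath
  obtain ⟨Q', hQ', hQverts, hQglen⟩ := hQ.exists_isOrientedABPath
  rw [← hPverts, ← hQverts]
  exact hP'.not_disjoint_of_glen_ne hQ' hn (hPglen ▸ hPμ) (hQglen ▸ hQμ)

end Tent

section ErdosPosa

/-- The Erdős–Pósa property of the family of `Λ`-allowable `A`-`B`-paths, with a single bounding
function for all graphs and all vertex sets `A` and `B`. -/
def AllowableABPathsErdosPosa {Γ : Type} [AddCommMonoid Γ] (Λ : Set Γ) : Prop :=
  ∃ f : ℕ → ℕ, ∀ k : ℕ, 0 < k → ∀ (V : Type) (A B : Set V) (G : LabGraph V Γ),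
    (∃ Ps : Fin k → GPath G,
      (∀ i, IsABPath A B (Ps i) ∧ (Ps i).glen ∈ Λ) ∧
      ∀ i j, i ≠ j → Disjoint (Ps i).verts (Ps j).verts) ∨
    (∃ X : Set V, X.Finite ∧ X.ncard ≤ f k ∧
      ∀ P : GPath G, IsABPath A B P → P.glen ∈ Λ → (P.verts ∩ X).Nonempty)

theorem allowableABPathsErdosPosa_univ {Γ : Type} [AddCommMonoid Γ] :
    AllowableABPathsErdosPosa (Set.univ : Set Γ) := by
  refine ⟨fun k => 5 * k, fun k _ V A B G => ?_⟩
  obtain ⟨W, hW, hdisj⟩ | ⟨X, hXcard, hX⟩ :=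
    packs_or_exists_hitting_set_joinsDistinct G.toSimpleGraph A B k
  · choose P hP hPW using fun i => (hW i).exists_isABPath
    exact .inl ⟨P, fun i => ⟨hP i, Set.mem_univ _⟩,
      fun i j hij => (hdisj hij).mono (hPW i) (hPW j)⟩
  · refine .inr ⟨X, X.finite_toSet, by simpa using hXcard, fun P hP _ => ?_⟩
    by_contra hPX
    rw [Set.not_nonempty_iff_eq_empty, ← Set.disjoint_iff_inter_eq_empty] at hPX
    exact hX (hP.joinsDistinct.mono subset_rfl subset_rfl hPX.subset_compl_right)

theorem not_allowableABPathsErdosPosa {Γ : Type} [AddCommGroup Γ] {Λ : Set Γ}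
    (hne : Λ.Nonempty) (huniv : Λ ≠ Set.univ) : ¬ AllowableABPathsErdosPosa Λ := by
  obtain ⟨l, hl⟩ := hne
  obtain ⟨μ, hμ⟩ := (Set.ne_univ_iff_exists_notMem Λ).1 huniv
  rintro ⟨f, hf⟩
  have hodd : Odd (4 * f 2 + 3) := ⟨2 * f 2 + 1, by ring⟩
  obtain ⟨P, hP, hdisj⟩ | ⟨X, hXfin, hXcard, hX⟩ := hf 2 two_pos (ℕ × ℕ) (tentColumn 0)
    (tentColumn (4 * f 2 + 3)) (tentGraph μ (l - μ))
  · exact (hP 0).1.not_disjoint_of_glen_ne (hP 1).1 hodd (ne_of_mem_of_not_mem (hP 0).2 hμ)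
      (ne_of_mem_of_not_mem (hP 1).2 hμ) (hdisj 0 1 zero_ne_one)
  · obtain ⟨c, hc, hc0, hcle, hcX⟩ := exists_tentPath_disjoint μ (l - μ) hXfin hXcard
    have hglen : (tentPath μ (l - μ) hc (4 * f 2 + 3)).glen ∈ Λ := by
      rwa [glen_tentPath μ (l - μ) hc hc0 (by omega), add_sub_cancel]
    exact (hX _ (isABPath_tentPath μ (l - μ) hc hodd.pos) hglen).ne_empty (hcX _).inter_eq

theorem erdos_posa_allowable_AB_paths_dichotomy_general
    {Γ : Type} [AddCommGroup Γ] (Λ : Set Γ) :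
    ((Λ.Nonempty ∧ Λ ≠ Set.univ) → ¬ AllowableABPathsErdosPosa Λ) ∧
      (Λ = Set.univ → AllowableABPathsErdosPosa Λ) :=
  ⟨fun ⟨hne, huniv⟩ => not_allowableABPathsErdosPosa hne huniv,
    fun huniv => huniv ▸ allowableABPathsErdosPosa_univ⟩

end ErdosPosa

/-- If `∅ ≠ Λ ⊊ Γ`, then the family of `Λ`-allowable `A`-`B`-paths
does not satisfy the Erdős–Pósa property; if `Λ = Γ`, then it does. -/
theorem erdos_posa_allowable_AB_paths_dichotomy
    (Γ : Type) [AddCommGroup Γ] [Fintype Γ] (Λ : Set Γ) :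
    ((Λ.Nonempty ∧ Λ ≠ Set.univ) →
      ¬ ∃ f : ℕ → ℕ, ∀ k : ℕ, 0 < k → ∀ (V : Type) (A B : Set V) (G : LabGraph V Γ),
        (∃ Ps : Fin k → GPath G,
          (∀ i, IsABPath A B (Ps i) ∧ (Ps i).glen ∈ Λ) ∧
          ∀ i j, i ≠ j → Disjoint (Ps i).verts (Ps j).verts) ∨
        (∃ X : Set V, X.Finite ∧ X.ncard ≤ f k ∧
          ∀ P : GPath G, IsABPath A B P → P.glen ∈ Λ → (P.verts ∩ X).Nonempty)) ∧
    (Λ = Set.univ →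
      ∃ f : ℕ → ℕ, ∀ k : ℕ, 0 < k → ∀ (V : Type) (A B : Set V) (G : LabGraph V Γ),
        (∃ Ps : Fin k → GPath G,
          (∀ i, IsABPath A B (Ps i) ∧ (Ps i).glen ∈ Λ) ∧
          ∀ i j, i ≠ j → Disjoint (Ps i).verts (Ps j).verts) ∨
        (∃ X : Set V, X.Finite ∧ X.ncard ≤ f k ∧
          ∀ P : GPath G, IsABPath A B P → P.glen ∈ Λ → (P.verts ∩ X).Nonempty)) :=
  erdos_posa_allowable_AB_paths_dichotomy_general Λ
end

section
/- Let Γ be a finite abelian group and let Λ ⊆ Γ with ∅ ≠ Λ ≠ Γ. In the group Γ' = Γ × (ℤ/2ℤ)², the set Λ' = {(g,(1,1)) : g ∈ Λ} does not satisfy (EP1); in fact, there exist a ∉ Λ and c ∈ Γ with a+c ∈ Λ, and then A = (a,(1,0)), B = (0,(0,1)), C = (c,(0,0)) satisfy A+B+C ∈ Λ', A+B ∉ Λ', (2A+⟨C⟩)∩Λ' = ∅, and (2B+⟨C⟩)∩Λ' = ∅. -/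
/-- The encoding of `Λ`-allowable `A`-`B`-paths: the subset
`Λ' = {(g, (1,1)) : g ∈ Λ}` of `Γ × (ℤ/2ℤ)²`. -/
def encSet {Γ : Type} (Λ : Set Γ) : Set (Γ × (ZMod 2 × ZMod 2)) :=
  {p | p.2 = (1, 1) ∧ p.1 ∈ Λ}

theorem not_EP1_iff {Γ : Type} [AddCommGroup Γ] {Λ : Set Γ} :
    ¬ EP1 Λ ↔ ∃ a b c : Γ, a + b + c ∈ Λ ∧ a + b ∉ Λ ∧
      (¬ ∃ z ∈ AddSubgroup.zmultiples c, 2 • a + z ∈ Λ) ∧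
      ¬ ∃ z ∈ AddSubgroup.zmultiples c, 2 • b + z ∈ Λ := by
  simp only [EP1, not_forall, not_or, exists_prop]

theorem exists_notMem_add_mem {G : Type*} [AddGroup G] {s : Set G}
    (hne : s.Nonempty) (hproper : s ≠ Set.univ) : ∃ a c : G, a ∉ s ∧ a + c ∈ s := by
  obtain ⟨g, hg⟩ := hne
  obtain ⟨a, ha⟩ := (Set.ne_univ_iff_exists_notMem s).1 hproper
  exact ⟨a, -a + g, ha, by rwa [add_neg_cancel_left]⟩

theorem snd_eq_zero_of_mem_zmultiples {G H : Type*} [AddGroup G] [AddGroup H] {p z : G × H}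
    (hp : p.2 = 0) (hz : z ∈ AddSubgroup.zmultiples p) : z.2 = 0 := by
  obtain ⟨n, rfl⟩ := AddSubgroup.mem_zmultiples_iff.1 hz
  rw [Prod.smul_snd, hp, smul_zero]

section encSet

variable {Γ : Type} {Λ : Set Γ}

theorem mk_one_one_mem_encSet {g : Γ} :
    ((g, (1, 1)) : Γ × (ZMod 2 × ZMod 2)) ∈ encSet Λ ↔ g ∈ Λ :=
  and_iff_right rfl

theorem notMem_encSet_of_snd_eq_zero {p : Γ × (ZMod 2 × ZMod 2)} (hp : p.2 = 0) :
    p ∉ encSet Λ := by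
  rintro ⟨hone, -⟩
  exact one_ne_zero (hone.symm.trans hp)

-- Doubling kills the `(ℤ/2ℤ)²`-component and adding multiples of `q` does not change it.
theorem not_exists_two_nsmul_add_mem_encSet [AddCommGroup Γ]
    (p : Γ × (ZMod 2 × ZMod 2)) {q : Γ × (ZMod 2 × ZMod 2)} (hq : q.2 = 0) :
    ¬ ∃ z ∈ AddSubgroup.zmultiples q, 2 • p + z ∈ encSet Λ := by
  rintro ⟨z, hz, hmem⟩
  refine notMem_encSet_of_snd_eq_zero ?_ hmem
  rw [Prod.snd_add, Prod.smul_snd, CharTwo.two_nsmul, snd_eq_zero_of_mem_zmultiples hq hz,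
    add_zero]

end encSet

theorem encoded_AB_set_fails_EP1_general
    (Γ : Type) [AddCommGroup Γ] (Λ : Set Γ)
    (hne : Λ.Nonempty) (hproper : Λ ≠ Set.univ) :
    ¬ EP1 (encSet Λ) ∧
    ∃ a c : Γ, a ∉ Λ ∧ a + c ∈ Λ ∧
      (((a, ((1 : ZMod 2), (0 : ZMod 2))) : Γ × (ZMod 2 × ZMod 2)) +
        (0, (0, 1)) + (c, (0, 0)) ∈ encSet Λ) ∧
      (((a, ((1 : ZMod 2), (0 : ZMod 2))) : Γ × (ZMod 2 × ZMod 2)) +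
        (0, (0, 1)) ∉ encSet Λ) ∧
      (¬ ∃ z ∈ AddSubgroup.zmultiples
          (((c, ((0 : ZMod 2), (0 : ZMod 2)))) : Γ × (ZMod 2 × ZMod 2)),
        2 • (((a, ((1 : ZMod 2), (0 : ZMod 2)))) : Γ × (ZMod 2 × ZMod 2)) + z ∈ encSet Λ) ∧
      (¬ ∃ z ∈ AddSubgroup.zmultiples
          (((c, ((0 : ZMod 2), (0 : ZMod 2)))) : Γ × (ZMod 2 × ZMod 2)),
        2 • (((0, ((0 : ZMod 2), (1 : ZMod 2)))) : Γ × (ZMod 2 × ZMod 2)) + z ∈ encSet Λ) := by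
  obtain ⟨a, c, ha, hac⟩ := exists_notMem_add_mem hne hproper
  have hABC : ((a, (1, 0)) : Γ × (ZMod 2 × ZMod 2)) + (0, (0, 1)) + (c, (0, 0)) ∈ encSet Λ := by
    simpa [mk_one_one_mem_encSet] using hac
  have hAB : ((a, (1, 0)) : Γ × (ZMod 2 × ZMod 2)) + (0, (0, 1)) ∉ encSet Λ := by
    simpa [mk_one_one_mem_encSet] using ha
  have hA := not_exists_two_nsmul_add_mem_encSet (Λ := Λ) (a, (1, 0)) (q := (c, (0, 0))) rfl
  have hB := not_exists_two_nsmul_add_mem_encSet (Λ := Λ) (0, (0, 1)) (q := (c, (0, 0))) rfl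
  exact ⟨not_EP1_iff.2 ⟨_, _, _, hABC, hAB, hA, hB⟩, a, c, ha, hac, hABC, hAB, hA, hB⟩

/-- If `∅ ≠ Λ ≠ Γ`, then `Λ' = {(g,(1,1)) : g ∈ Λ}` fails (EP1) in
`Γ × (ℤ/2ℤ)²`; in fact there are `a ∉ Λ` and `c ∈ Γ` with `a + c ∈ Λ`, and then
`A = (a,(1,0))`, `B = (0,(0,1))`, `C = (c,(0,0))` witness the failure. -/
theorem encoded_AB_set_fails_EP1
    (Γ : Type) [AddCommGroup Γ] [Fintype Γ] (Λ : Set Γ)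
    (hne : Λ.Nonempty) (hproper : Λ ≠ Set.univ) :
    ¬ EP1 (encSet Λ) ∧
    ∃ a c : Γ, a ∉ Λ ∧ a + c ∈ Λ ∧
      (((a, ((1 : ZMod 2), (0 : ZMod 2))) : Γ × (ZMod 2 × ZMod 2)) +
        (0, (0, 1)) + (c, (0, 0)) ∈ encSet Λ) ∧
      (((a, ((1 : ZMod 2), (0 : ZMod 2))) : Γ × (ZMod 2 × ZMod 2)) +
        (0, (0, 1)) ∉ encSet Λ) ∧
      (¬ ∃ z ∈ AddSubgroup.zmultiples
          (((c, ((0 : ZMod 2), (0 : ZMod 2)))) : Γ × (ZMod 2 × ZMod 2)),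
        2 • (((a, ((1 : ZMod 2), (0 : ZMod 2)))) : Γ × (ZMod 2 × ZMod 2)) + z ∈ encSet Λ) ∧
      (¬ ∃ z ∈ AddSubgroup.zmultiples
          (((c, ((0 : ZMod 2), (0 : ZMod 2)))) : Γ × (ZMod 2 × ZMod 2)),
        2 • (((0, ((0 : ZMod 2), (1 : ZMod 2)))) : Γ × (ZMod 2 × ZMod 2)) + z ∈ encSet Λ) :=
  encoded_AB_set_fails_EP1_general Γ Λ hne hproper
end
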